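/- arXiv:math/9912221 — 2 statements merged into one kernel-verified Lean document; each statement's English description precedes it below -/
import Mathlib

section
/- Let R be a regular commutative coherent ring. Then the map f, sending a wide subcategory C of finitely presented R-modules to the thick subcategory f(C) = {small X ∈ D(R) : H_n X ∈ C for all n}, is a lattice isomorphism from the lattice of wide subcategories of finitely presented R-modules onto the lattice of thick subcategories of small objects of D(R). Consequently, the map sending S ∈ J̃(Spec R) to the wide subcategory {finitely presented M : M_{(p)} = 0 for all p ∈ S} is an isomorphism from J̃(Spec R) (with order reversed) onto the lattice of wide subcategories of finitely presented R-modules. -/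
open CategoryTheory CategoryTheory.Limits CategoryTheory.Pretriangulated ZeroObject

universe w u

/-- A full subcategory (given as a set of objects) of an abelian category is *wide*
if it is closed under isomorphisms, kernels, cokernels and extensions. -/
structure IsWideSubcategory {A : Type*} [Category A] [Abelian A] (C : Set A) : Prop where
  mem_of_iso : ∀ {X Y : A}, (X ≅ Y) → X ∈ C → Y ∈ C
  kernel_mem : ∀ {X Y : A} (f : X ⟶ Y), X ∈ C → Y ∈ C → kernel f ∈ C
  cokernel_mem : ∀ {X Y : A} (f : X ⟶ Y), X ∈ C → Y ∈ C → cokernel f ∈ C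
  extension_mem : ∀ (S : CategoryTheory.ShortComplex A), S.ShortExact →
    S.X₁ ∈ C → S.X₃ ∈ C → S.X₂ ∈ C

/-- The wide subcategory generated by a set of objects: the intersection of all
wide subcategories containing it. -/
def wideClosure {A : Type*} [Category A] [Abelian A] (S : Set A) : Set A :=
  ⋂₀ {C : Set A | IsWideSubcategory C ∧ S ⊆ C}

/-- `C₀`, the wide subcategory of `R`-modules generated by the module `R`. -/
def wideSubcatGenByRing (R : Type u) [Ring R] : Set (ModuleCat.{u} R) :=
  wideClosure {ModuleCat.of R R}

/-- A thick subcategory of a (pre)triangulated category: a full triangulated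
subcategory closed under retracts (direct summands). -/
structure IsThickSubcategory {T : Type*} [Category T] [HasZeroObject T] [Preadditive T]
    [HasShift T ℤ] [∀ n : ℤ, (shiftFunctor T n).Additive] [Pretriangulated T]
    (D : Set T) : Prop where
  mem_of_iso : ∀ {X Y : T}, (X ≅ Y) → X ∈ D → Y ∈ D
  zero_mem : (0 : T) ∈ D
  shift_mem : ∀ (X : T) (n : ℤ), X ∈ D → X⟦n⟧ ∈ D
  ext₂ : ∀ (T' : Triangle T), T' ∈ (distTriang T) → T'.obj₁ ∈ D → T'.obj₃ ∈ D → T'.obj₂ ∈ D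
  retract_mem : ∀ (X Y : T) (i : X ⟶ Y) (r : Y ⟶ X), i ≫ r = 𝟙 X → Y ∈ D → X ∈ D

/-- An object of the derived category of `R`-modules is *small* if it belongs to every
thick subcategory containing the complex `S⁰R` (`R` concentrated in degree `0`), i.e. to
the thick subcategory generated by `S⁰R`; equivalently, `Hom(X,-)` commutes with
arbitrary direct sums. -/
def IsSmallObject {R : Type u} [Ring R] [HasDerivedCategory.{w} (ModuleCat.{u} R)]
    (X : DerivedCategory (ModuleCat.{u} R)) : Prop :=
  ∀ D : Set (DerivedCategory (ModuleCat.{u} R)), IsThickSubcategory D →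
    (DerivedCategory.singleFunctor (ModuleCat.{u} R) 0).obj (ModuleCat.of R R) ∈ D → X ∈ D

/-- The map `f` : it sends a wide subcategory `C` to the collection of small objects `X`
of the derived category such that `Hₙ X ∈ C` for all `n`. -/
def fSet {R : Type u} [Ring R] [HasDerivedCategory.{w} (ModuleCat.{u} R)]
    (C : Set (ModuleCat.{u} R)) : Set (DerivedCategory (ModuleCat.{u} R)) :=
  {X | IsSmallObject X ∧
    ∀ n : ℤ, (DerivedCategory.homologyFunctor (ModuleCat.{u} R) n).obj X ∈ C}

/-- The map `g` : it sends a thick subcategory `D` to the wide subcategory generated by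
the homology modules `Hₙ X` for `X ∈ D` and `n : ℤ`. -/
def gSet {R : Type u} [Ring R] [HasDerivedCategory.{w} (ModuleCat.{u} R)]
    (D : Set (DerivedCategory (ModuleCat.{u} R))) : Set (ModuleCat.{u} R) :=
  wideClosure {M | ∃ X ∈ D, ∃ n : ℤ,
    Nonempty ((DerivedCategory.homologyFunctor (ModuleCat.{u} R) n).obj X ≅ M)}

/-- A ring is left coherent if every finitely generated left ideal is finitely
presented as a module. -/
def IsLeftCoherentRing (R : Type u) [Ring R] : Prop :=
  ∀ I : Ideal R, I.FG → Module.FinitePresentation R I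

/-- The collection of finitely presented `R`-modules. -/
def finPresModules (R : Type u) [Ring R] : Set (ModuleCat.{u} R) :=
  {M : ModuleCat.{u} R | Module.FinitePresentation R M}

/-- An `R`-module `M` has finite projective dimension if there is an `i` such that
`Ext^j(M, N) = 0` for all modules `N` and all `j > i`. -/
def HasFiniteProjectiveDimension (R : Type u) [Ring R] (M : ModuleCat.{u} R) : Prop :=
  ∃ i : ℕ, ∀ (N : ModuleCat.{u} R) (j : ℕ), i < j →
    Subsingleton (((_root_.Ext ℤ (ModuleCat.{u} R) j).obj (Opposite.op M)).obj N)

/-- The lattice of (nonempty) wide subcategories of finitely presented `R`-modules. -/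
def wideLatticeFP (R : Type u) [Ring R] : Set (Set (ModuleCat.{u} R)) :=
  {C | IsWideSubcategory C ∧ C.Nonempty ∧ C ⊆ finPresModules R}

/-- The lattice of thick subcategories of small objects of the derived category. -/
def thickLatticeSmall (R : Type u) [Ring R] [HasDerivedCategory.{w} (ModuleCat.{u} R)] :
    Set (Set (DerivedCategory (ModuleCat.{u} R))) :=
  {D | IsThickSubcategory D ∧ ∀ X ∈ D, IsSmallObject X}

/-- `f` is a lattice isomorphism from the lattice of wide subcategories of finitely
presented `R`-modules onto the lattice of thick subcategories of small objects of
`D(R)`: it maps the first lattice into the second, preserves and reflects inclusions,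
and is surjective. -/
def fIsLatticeIso (R : Type u) [Ring R] [HasDerivedCategory.{w} (ModuleCat.{u} R)] : Prop :=
  (∀ C ∈ wideLatticeFP R, fSet C ∈ thickLatticeSmall R) ∧
  (∀ C₁ ∈ wideLatticeFP R, ∀ C₂ ∈ wideLatticeFP R, (fSet C₁ ⊆ fSet C₂ ↔ C₁ ⊆ C₂)) ∧
  (∀ D ∈ thickLatticeSmall R, ∃ C ∈ wideLatticeFP R, fSet C = D)

/-- `J̃(Spec R)`: the collection of subsets of `Spec R` that are arbitrary intersections
of quasi-compact Zariski-open subsets. -/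
def tildeJ (R : Type u) [CommRing R] : Set (Set (PrimeSpectrum R)) :=
  {S | ∃ 𝒰 : Set (Set (PrimeSpectrum R)),
    (∀ U ∈ 𝒰, IsOpen U ∧ IsCompact U) ∧ S = ⋂₀ 𝒰}

/-- The wide subcategory of finitely presented modules vanishing upon localization at
every prime of `S`. -/
def supportVanishing (R : Type u) [CommRing R] (S : Set (PrimeSpectrum R)) :
    Set (ModuleCat.{u} R) :=
  {M | Module.FinitePresentation R M ∧
    ∀ p ∈ S, Subsingleton (LocalizedModule p.asIdeal.primeCompl M)}

/-! A thick subcategory `D` of small objects is determined by its support, the set of primes at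
which some homology module of some object of `D` is nonzero: a finitely presented module `N`, placed
in degree `0`, lies in `D` as soon as its support is contained in that of `D`. By regularity, small
objects are exactly the bounded objects with finitely presented homology, and they are built from
their homology modules, so this criterion recovers `D` from its support.

To prove the criterion, consider the ideals `I` such that `D` contains every finitely presented
module annihilated by a certain finitely generated ideal below `I`. They form an Oka family, so by
Zorn's lemma only a prime `p` containing the annihilator of `N` has to be treated. Choose a bounded
above complex `K` of finitely generated projective modules which represents an object of `D` and
satisfies `p ∈ Supp H₀ K`. Some `x : K⁰` and `φ : K⁰ → R` then satisfy `φ x ∉ p`, while `d x ∈ p K¹`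
and `φ (d y) ∈ p` for all `y`. If `N` is annihilated by a suitable finitely generated ideal below
`p`, then multiplication by `φ x` on `N` factors as `N ⟶ K ⊗ N ⟶ N` in the derived category.
Regularity gives `K ⊗ N ∈ D`, hence `N ∈ D` as soon as `D` contains the kernel and cokernel of
multiplication by `φ x`, which are annihilated by `φ x`. -/

/-! ### Wide subcategories of an abelian category -/

section Abelian

variable {A : Type*} [Category A] [Abelian A]

lemma shortExact_cokernelDesc_kernelLift {X₁ X₂ X₃ X₄ X₅ : A}
    (f₁ : X₁ ⟶ X₂) (f₂ : X₂ ⟶ X₃) (f₃ : X₃ ⟶ X₄) (f₄ : X₄ ⟶ X₅)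
    (w₁ : f₁ ≫ f₂ = 0) (w₂ : f₂ ≫ f₃ = 0) (w₃ : f₃ ≫ f₄ = 0)
    (h₁ : (ShortComplex.mk f₁ f₂ w₁).Exact) (h₂ : (ShortComplex.mk f₂ f₃ w₂).Exact)
    (h₃ : (ShortComplex.mk f₃ f₄ w₃).Exact) :
    (ShortComplex.mk (cokernel.desc f₁ f₂ w₁) (kernel.lift f₄ f₃ w₃)
      (by simp [← cancel_epi (cokernel.π f₁), ← cancel_mono (kernel.ι f₄), w₂])).ShortExact := by
  have hlift : (ShortComplex.mk f₂ (kernel.lift f₄ f₃ w₃)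
      (by simp [← cancel_mono (kernel.ι f₄), w₂])).Exact :=
    (ShortComplex.exact_iff_of_epi_of_isIso_of_mono
      (S₂ := .mk f₂ f₃ w₂) { τ₁ := 𝟙 X₂, τ₂ := 𝟙 X₃, τ₃ := kernel.ι f₄ }).2 h₂
  have hdesc := (ShortComplex.exact_iff_of_epi_of_isIso_of_mono
    (S₁ := .mk f₂ (kernel.lift f₄ f₃ w₃) (by simp [← cancel_mono (kernel.ι f₄), w₂]))
    (S₂ := .mk (cokernel.desc f₁ f₂ w₁) (kernel.lift f₄ f₃ w₃)
      (by simp [← cancel_epi (cokernel.π f₁), ← cancel_mono (kernel.ι f₄), w₂]))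
    { τ₁ := cokernel.π f₁, τ₂ := 𝟙 X₃, τ₃ := 𝟙 (kernel f₄) }).1 hlift
  exact { exact := hdesc, mono_f := h₁.mono_cokernelDesc, epi_g := h₃.epi_kernelLift }

namespace IsWideSubcategory

variable {C : Set A} (hC : IsWideSubcategory C)
include hC

lemma mem_of_exact {X₁ X₂ X₃ X₄ X₅ : A}
    {f₁ : X₁ ⟶ X₂} {f₂ : X₂ ⟶ X₃} {f₃ : X₃ ⟶ X₄} {f₄ : X₄ ⟶ X₅}
    {w₁ : f₁ ≫ f₂ = 0} {w₂ : f₂ ≫ f₃ = 0} {w₃ : f₃ ≫ f₄ = 0}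
    (h₁ : (ShortComplex.mk f₁ f₂ w₁).Exact) (h₂ : (ShortComplex.mk f₂ f₃ w₂).Exact)
    (h₃ : (ShortComplex.mk f₃ f₄ w₃).Exact)
    (hX₁ : X₁ ∈ C) (hX₂ : X₂ ∈ C) (hX₄ : X₄ ∈ C) (hX₅ : X₅ ∈ C) : X₃ ∈ C :=
  hC.extension_mem _ (shortExact_cokernelDesc_kernelLift _ _ _ _ w₁ w₂ w₃ h₁ h₂ h₃)
    (hC.cokernel_mem f₁ hX₁ hX₂) (hC.kernel_mem f₄ hX₄ hX₅)

lemma mem_of_isZero (hne : C.Nonempty) {X : A} (hX : IsZero X) : X ∈ C := by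
  obtain ⟨Y, hY⟩ := hne
  exact hC.mem_of_iso ((isZero_kernel_of_mono (𝟙 Y)).iso hX) (hC.kernel_mem (𝟙 Y) hY hY)

lemma mem_of_retract {X Y : A} (r : Retract X Y) (hY : Y ∈ C) : X ∈ C := by
  have hfork : IsLimit (KernelFork.ofι (f := 𝟙 Y - r.r ≫ r.i) r.i (by simp)) :=
    KernelFork.IsLimit.ofι' _ _ fun k hk =>
      ⟨k ≫ r.r, by simpa [sub_eq_zero, eq_comm (a := k)] using hk⟩
  exact hC.mem_of_iso ((kernelIsKernel _).conePointUniqueUpToIso hfork)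
    (hC.kernel_mem (𝟙 Y - r.r ≫ r.i) hY hY)

end IsWideSubcategory

end Abelian

/-! ### Thick subcategories -/

section Pretriangulated

variable {T : Type*} [Category T] [HasZeroObject T] [Preadditive T]
  [HasShift T ℤ] [∀ n : ℤ, (shiftFunctor T n).Additive] [Pretriangulated T]

namespace IsThickSubcategory

variable {D : Set T} (hD : IsThickSubcategory D)
include hD

lemma isStableUnderRetracts : ObjectProperty.IsStableUnderRetracts (C := T) (· ∈ D) where
  of_retract r := hD.retract_mem _ _ r.i r.r r.retract

lemma isTriangulated : ObjectProperty.IsTriangulated (C := T) (· ∈ D) where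
  exists_zero := ⟨0, isZero_zero T, hD.zero_mem⟩
  isStableUnderShiftBy n := ⟨fun X hX => hD.shift_mem X n hX⟩
  ext₂' Δ hΔ h₁ h₃ := ObjectProperty.le_isoClosure _ _ (hD.ext₂ Δ hΔ h₁ h₃)

lemma inter {D' : Set T} (hD' : IsThickSubcategory D') : IsThickSubcategory (D ∩ D') where
  mem_of_iso e h := ⟨hD.mem_of_iso e h.1, hD'.mem_of_iso e h.2⟩
  zero_mem := ⟨hD.zero_mem, hD'.zero_mem⟩
  shift_mem X n h := ⟨hD.shift_mem X n h.1, hD'.shift_mem X n h.2⟩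
  ext₂ Δ hΔ h₁ h₃ := ⟨hD.ext₂ Δ hΔ h₁.1 h₃.1, hD'.ext₂ Δ hΔ h₁.2 h₃.2⟩
  retract_mem X Y i r hir h := ⟨hD.retract_mem X Y i r hir h.1, hD'.retract_mem X Y i r hir h.2⟩

end IsThickSubcategory

variable (P : ObjectProperty T) [P.IsTriangulated] [P.IsStableUnderRetracts]

lemma isThickSubcategory_setOf : IsThickSubcategory {X | P X} where
  mem_of_iso e := P.prop_of_iso e
  zero_mem := P.prop_zero
  shift_mem X n := P.le_shift n X
  ext₂ := P.ext_of_isTriangulatedClosed₂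
  retract_mem _ _ i r h := P.prop_of_retract ⟨i, r, h⟩

lemma prop_of_trW_comp [IsTriangulated T] {X Y : T} (i : X ⟶ Y) (r : Y ⟶ X) (hY : P Y)
    (h : P.trW (i ≫ r)) : P X := by
  obtain ⟨Z, t, t', hr⟩ := distinguished_cocone_triangle r
  obtain ⟨V, v, v', hV, hVP⟩ := P.trW.comp_mem _ _ h (ObjectProperty.trW.mk' P hr hY)
  have hrt : r ≫ t = 0 := comp_distTriang_mor_zero₁₂ _ hr
  obtain ⟨s, hs⟩ := Triangle.coyoneda_exact₁ _ hV (𝟙 (X⟦(1 : ℤ)⟧)) (by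
    change 𝟙 _ ≫ (shiftFunctor T (1 : ℤ)).map ((i ≫ r) ≫ t) = 0
    rw [Category.assoc, hrt, comp_zero, Functor.map_zero, comp_zero])
  exact (P.prop_shift_iff_of_isStableUnderShift X (1 : ℤ)).1
    (P.prop_of_retract ⟨s, v', hs.symm⟩ hVP)

end Pretriangulated

/-! ### Coherent rings -/

section Coherent

/-- A module is *pseudo-coherent*, in the sense of Bourbaki, if all its finitely generated
submodules are finitely presented. A ring is left coherent exactly when it is pseudo-coherent as a
left module over itself. -/
def IsPseudoCoherent (R M : Type*) [Ring R] [AddCommGroup M] [Module R M] : Prop :=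
  ∀ N : Submodule R M, N.FG → Module.FinitePresentation R N

namespace IsPseudoCoherent

variable {R M N : Type*} [Ring R] [AddCommGroup M] [Module R M] [AddCommGroup N] [Module R N]

lemma finitePresentation_range (hN : IsPseudoCoherent R N) [Module.Finite R M] (f : M →ₗ[R] N) :
    Module.FinitePresentation R (LinearMap.range f) :=
  hN _ (LinearMap.range_eq_map f ▸ Module.Finite.fg_top.map f)

lemma of_injective (hN : IsPseudoCoherent R N) {f : M →ₗ[R] N} (hf : Function.Injective f) :
    IsPseudoCoherent R M := fun K hK =>
  have := hN _ (hK.map f)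
  .of_equiv (K.equivMapOfInjective f hf).symm

lemma of_ker (f : M →ₗ[R] N) (hN : IsPseudoCoherent R N)
    (hker : IsPseudoCoherent R (LinearMap.ker f)) : IsPseudoCoherent R M := by
  intro K hK
  have : Module.Finite R K := .of_fg hK
  let g := (f ∘ₗ K.subtype).rangeRestrict
  have hg : Function.Surjective g := LinearMap.surjective_rangeRestrict _
  have hrange := hN.finitePresentation_range (f ∘ₗ K.subtype)
  have hfg : Module.Finite R (LinearMap.ker g) := .of_fg (Module.FinitePresentation.fg_ker g hg)
  let j : LinearMap.ker g →ₗ[R] LinearMap.ker f :=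
    (K.subtype ∘ₗ (LinearMap.ker g).subtype).codRestrict _ fun x =>
      congrArg Subtype.val (LinearMap.mem_ker.1 x.2)
  have hj : Function.Injective j := fun x y hxy =>
    Subtype.ext (Subtype.ext (congrArg (fun z : LinearMap.ker f => (z : M)) hxy))
  have := hker.of_injective hj ⊤ Module.Finite.fg_top
  have : Module.FinitePresentation R (LinearMap.ker g) := .of_equiv Submodule.topEquiv
  exact Module.finitePresentation_of_ker g hg

lemma pi_fin (hM : IsPseudoCoherent R M) : ∀ n : ℕ, IsPseudoCoherent R (Fin n → M)
  | 0 => fun _ _ => inferInstance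
  | n + 1 => by
    refine of_ker (LinearMap.proj (0 : Fin (n + 1))) hM (of_injective (hM.pi_fin n)
      (f := LinearMap.funLeft R M Fin.succ ∘ₗ Submodule.subtype _) fun x y hxy => ?_)
    refine Subtype.ext (funext (Fin.cases ?_ fun i => congrFun hxy i))
    exact (LinearMap.mem_ker.1 x.2).trans (LinearMap.mem_ker.1 y.2).symm

lemma of_surjective (hM : IsPseudoCoherent R M) {f : M →ₗ[R] N} (hf : Function.Surjective f)
    (hker : (LinearMap.ker f).FG) : IsPseudoCoherent R N := by
  intro K hK
  have hle : LinearMap.ker f ≤ K.comap f := fun x hx => by simp [LinearMap.mem_ker.1 hx]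
  have hcomap : (K.comap f).FG := Submodule.fg_of_fg_map_of_fg_inf_ker f
    (by rwa [Submodule.map_comap_eq_of_surjective hf]) (by rwa [inf_eq_right.2 hle])
  have := hM _ hcomap
  let g : K.comap f →ₗ[R] K := f.restrict fun _ hx => hx
  have hg : Function.Surjective g := fun ⟨y, hy⟩ =>
    let ⟨x, hx⟩ := hf y
    ⟨⟨x, by simpa [hx] using hy⟩, Subtype.ext hx⟩
  refine Module.finitePresentation_of_surjective g hg ?_
  have hkerg : (LinearMap.ker g).map (K.comap f).subtype = LinearMap.ker f := by
    rw [show LinearMap.ker g = (LinearMap.ker f).comap (K.comap f).subtype from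
      Submodule.ext fun x => Subtype.ext_iff, Submodule.map_comap_subtype, inf_eq_right.2 hle]
  exact Submodule.fg_of_fg_map_injective _ (Submodule.subtype_injective _) (hkerg ▸ hker)

end IsPseudoCoherent

namespace IsLeftCoherentRing

variable {R : Type u} [Ring R] (hR : IsLeftCoherentRing R)
  {M N : Type*} [AddCommGroup M] [Module R M] [AddCommGroup N] [Module R N]
include hR

lemma isPseudoCoherent (M : Type*) [AddCommGroup M] [Module R M]
    [Module.FinitePresentation R M] : IsPseudoCoherent R M := by
  obtain ⟨n, f, hf⟩ := Module.Finite.exists_fin' R M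
  exact (IsPseudoCoherent.pi_fin hR n).of_surjective hf (Module.FinitePresentation.fg_ker f hf)

lemma fg_ker [Module.Finite R M] [Module.FinitePresentation R N] (f : M →ₗ[R] N) :
    (LinearMap.ker f).FG := by
  have := (hR.isPseudoCoherent N).finitePresentation_range f
  simpa using Module.FinitePresentation.fg_ker f.rangeRestrict f.surjective_rangeRestrict

lemma finitePresentation_ker [Module.FinitePresentation R M] [Module.FinitePresentation R N]
    (f : M →ₗ[R] N) : Module.FinitePresentation R (LinearMap.ker f) :=
  hR.isPseudoCoherent M _ (hR.fg_ker f)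

lemma isWideSubcategory_finPresModules : IsWideSubcategory (finPresModules R) where
  mem_of_iso e (_ : Module.FinitePresentation R _) :=
    Module.FinitePresentation.of_equiv e.toLinearEquiv
  kernel_mem f (_ : Module.FinitePresentation R _) (_ : Module.FinitePresentation R _) :=
    have := hR.finitePresentation_ker f.hom
    Module.FinitePresentation.of_equiv (ModuleCat.kernelIsoKer f).toLinearEquiv.symm
  cokernel_mem {X Y} f (_ : Module.FinitePresentation R X) (_ : Module.FinitePresentation R Y) :=
    have : Module.FinitePresentation R (Y ⧸ LinearMap.range f.hom) :=
      Module.finitePresentation_of_surjective _ (Submodule.mkQ_surjective _) (by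
        rw [Submodule.ker_mkQ, LinearMap.range_eq_map]; exact Module.Finite.fg_top.map f.hom)
    Module.FinitePresentation.of_equiv (ModuleCat.cokernelIsoRangeQuotient f).toLinearEquiv.symm
  extension_mem S hS (_ : Module.FinitePresentation R _) (_ : Module.FinitePresentation R _) := by
    have : Module.FinitePresentation R (LinearMap.ker S.g.hom) := by
      have hfg := (ShortComplex.ShortExact.moduleCat_exact_iff_function_exact S).1 hS.exact
      rw [hfg.linearMap_ker_eq]
      exact .of_equiv (LinearEquiv.ofInjective S.f.hom hS.moduleCat_injective_f)
    exact Module.finitePresentation_of_ker S.g.hom hS.moduleCat_surjective_g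

end IsLeftCoherentRing

end Coherent

/-! ### Regular coherent rings -/

/-- A left coherent ring is *regular* if all its finitely presented modules have finite projective
dimension. -/
structure IsRegularCoherentRing (R : Type u) [Ring R] : Prop where
  isLeftCoherentRing : IsLeftCoherentRing R
  hasFiniteProjectiveDimension : ∀ M : ModuleCat.{u} R, Module.FinitePresentation R M →
    HasFiniteProjectiveDimension R M

section Regular

variable {R : Type u} [Ring R]

lemma HasFiniteProjectiveDimension.exists_hasProjectiveDimensionLT {M : ModuleCat.{u} R}
    (h : HasFiniteProjectiveDimension R M) : ∃ n : ℕ, HasProjectiveDimensionLT M n := by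
  obtain ⟨i, hi⟩ := h
  refine ⟨i + 1, HasProjectiveDimensionLT.mk fun j hj Y e => ?_⟩
  obtain ⟨k, rfl⟩ : ∃ k, j = k + 1 := Nat.exists_eq_succ_of_ne_zero (by lia)
  let P := ProjectiveResolution.of M
  obtain ⟨f, hf, rfl⟩ := P.extMk_surjective e (k + 2) rfl
  rw [P.extMk_eq_zero_iff f (k + 2) rfl hf k rfl]
  have : Subsingleton (((_root_.Ext ℤ (ModuleCat R) (k + 1)).obj (.op M)).obj Y) :=
    hi Y (k + 1) (by lia)
  have hExt : IsZero ((P.complex.linearYonedaObj ℤ Y).homology (k + 1)) :=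
    .of_iso (ModuleCat.isZero_of_subsingleton _) (P.isoExt (R := ℤ) (k + 1) Y).symm
  rw [← HomologicalComplex.exactAt_iff_isZero_homology,
    HomologicalComplex.exactAt_iff' _ k (k + 1) (k + 2) (by simp) (by simp),
    ShortComplex.moduleCat_exact_iff] at hExt
  exact hExt (f : P.complex.X (k + 1) ⟶ Y) hf

theorem IsRegularCoherentRing.finitePresentation_induction (hR : IsRegularCoherentRing R)
    {Q : ModuleCat.{u} R → Prop}
    (projective : ∀ P : ModuleCat.{u} R, Module.Finite R P → Module.Projective R P → Q P)
    (shortExact : ∀ S : ShortComplex (ModuleCat.{u} R), S.ShortExact → Module.Finite R S.X₂ →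
      Module.Projective R S.X₂ → Q S.X₁ → Q S.X₃)
    (M : ModuleCat.{u} R) (hM : Module.FinitePresentation R M) : Q M := by
  obtain ⟨n, hn⟩ := (hR.hasFiniteProjectiveDimension M hM).exists_hasProjectiveDimensionLT
  replace hn := hasProjectiveDimensionLT_of_ge M n (n + 1) n.le_succ
  induction n generalizing M with
  | zero =>
    have : Projective M := projective_iff_hasProjectiveDimensionLT_one.2 hn
    exact projective M inferInstance ((IsProjective.iff_projective M).2 this)
  | succ n ih =>
    obtain ⟨m, f, hf⟩ := Module.Finite.exists_fin' R M
    have hS := LinearMap.shortExact_shortComplexKer hf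
    have hfree : Projective (ModuleCat.of R (Fin m → R)) :=
      (IsProjective.iff_projective _).1 inferInstance
    refine shortExact _ hS (inferInstanceAs (Module.Finite R (Fin m → R)))
      (inferInstanceAs (Module.Projective R (Fin m → R))) (ih _ ?_ ?_)
    · exact hR.isLeftCoherentRing.finitePresentation_ker f
    · exact (hS.hasProjectiveDimensionLT_X₃_iff n hfree).1 hn

end Regular

/-! ### Functors sending short exact sequences to distinguished triangles -/

section DeltaFunctor

/-- A *δ-functor* from an abelian category to a triangulated category sends short exact sequences to
distinguished triangles. The connecting morphisms are not required to be natural. -/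
def IsDeltaFunctor {A T : Type*} [Category A] [Abelian A] [Category T] [HasZeroObject T]
    [Preadditive T] [HasShift T ℤ] [∀ n : ℤ, (shiftFunctor T n).Additive] [Pretriangulated T]
    (F : A ⥤ T) : Prop :=
  ∀ S : ShortComplex A, S.ShortExact → ∃ δ : F.obj S.X₃ ⟶ (F.obj S.X₁)⟦(1 : ℤ)⟧,
    Triangle.mk (F.map S.f) (F.map S.g) δ ∈ distTriang T

namespace IsDeltaFunctor

variable {T : Type*} [Category T] [HasZeroObject T] [Preadditive T] [HasShift T ℤ]
  [∀ n : ℤ, (shiftFunctor T n).Additive] [Pretriangulated T] (P : ObjectProperty T)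

section Abelian

variable {A : Type*} [Category A] [Abelian A] {F : A ⥤ T} (hF : IsDeltaFunctor F)
include hF

lemma trW_map_of_mono {X Y : A} (f : X ⟶ Y) [Mono f] (h : P (F.obj (cokernel f))) :
    P.trW (F.map f) :=
  ObjectProperty.trW.mk P (hF (.mk f (cokernel.π f) (cokernel.condition f))
    { exact := ShortComplex.exact_cokernel f }).choose_spec h

lemma trW_map_of_epi [P.IsTriangulated] {X Y : A} (f : X ⟶ Y) [Epi f] (h : P (F.obj (kernel f))) :
    P.trW (F.map f) :=
  ObjectProperty.trW.mk' P (hF (.mk (kernel.ι f) f (kernel.condition f))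
    { exact := ShortComplex.exact_kernel f }).choose_spec h

variable [P.IsTriangulated] [P.IsClosedUnderIsomorphisms]

lemma prop₂ {S : ShortComplex A} (hS : S.ShortExact) (h₁ : P (F.obj S.X₁))
    (h₃ : P (F.obj S.X₃)) : P (F.obj S.X₂) :=
  P.ext_of_isTriangulatedClosed₂ _ (hF S hS).choose_spec h₁ h₃

lemma prop₃ {S : ShortComplex A} (hS : S.ShortExact) (h₁ : P (F.obj S.X₁))
    (h₂ : P (F.obj S.X₂)) : P (F.obj S.X₃) :=
  P.ext_of_isTriangulatedClosed₃ _ (hF S hS).choose_spec h₁ h₂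

lemma trW_map [IsTriangulated T] {X Y : A} (f : X ⟶ Y) (hker : P (F.obj (kernel f)))
    (hcoker : P (F.obj (cokernel f))) : P.trW (F.map f) := by
  rw [← image.fac f, F.map_comp]
  refine P.trW.comp_mem _ _ (hF.trW_map_of_epi P _ ?_) (hF.trW_map_of_mono P _ ?_)
  · exact P.prop_of_iso (F.mapIso (kernelIsoOfEq (image.fac f).symm ≪≫ kernelCompMono _ _)) hker
  · exact P.prop_of_iso (F.mapIso (cokernelIsoOfEq (image.fac f).symm ≪≫ cokernelEpiComp _ _))
      hcoker

end Abelian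

section Module

variable {R : Type u} [Ring R] {F : ModuleCat.{u} R ⥤ T} (hF : IsDeltaFunctor F)
  [P.IsTriangulated]
include hF

lemma prop_pi_fin [P.IsClosedUnderIsomorphisms] {M : Type u} [AddCommGroup M] [Module R M]
    (hM : P (F.obj (.of R M))) (n : ℕ) : P (F.obj (.of R (Fin n → M))) := by
  induction n with
  | zero =>
    refine hF.prop₃ P (S := .mk (𝟙 (ModuleCat.of R M)) (0 : _ ⟶ .of R (Fin 0 → M)) comp_zero)
      (ModuleCat.shortComplex_shortExact _ (fun x => ?_) (fun _ _ h => h) (fun y => ?_)) hM hM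
    · exact ⟨fun _ => ⟨x, rfl⟩, fun _ => rfl⟩
    · exact ⟨0, Subsingleton.elim _ _⟩
  | succ n ih =>
    have h := hF.prop₂ P (S := .mk (ModuleCat.ofHom (LinearMap.inl R M (Fin n → M)))
      (ModuleCat.ofHom (LinearMap.snd R M (Fin n → M))) (by ext; rfl))
      (ModuleCat.shortComplex_shortExact _ Function.Exact.inl_snd LinearMap.inl_injective
        LinearMap.snd_surjective) hM ih
    exact P.prop_of_iso
      (F.mapIso (Fin.consLinearEquiv R (fun _ : Fin (n + 1) => M)).toModuleIso) h

variable [P.IsStableUnderRetracts]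

lemma prop_of_projective (hR : P (F.obj (.of R R))) (M : ModuleCat.{u} R) [Module.Finite R M]
    [Module.Projective R M] : P (F.obj M) := by
  obtain ⟨n, f, g, -, -, hfg⟩ := Module.Finite.exists_comp_eq_id_of_projective R M
  have r : Retract M (.of R (Fin n → R)) :=
    ⟨ModuleCat.ofHom g, ModuleCat.ofHom f, by rw [← ModuleCat.ofHom_comp, hfg]; rfl⟩
  exact P.prop_of_retract (r.map F) (hF.prop_pi_fin P hR n)

lemma prop_of_finitePresentation (hreg : IsRegularCoherentRing R) (hR : P (F.obj (.of R R)))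
    (M : ModuleCat.{u} R) [Module.FinitePresentation R M] : P (F.obj M) :=
  hreg.finitePresentation_induction (Q := fun M => P (F.obj M))
    (fun M _ _ => hF.prop_of_projective P hR M)
    (fun _ hS _ _ h => hF.prop₃ P hS h (hF.prop_of_projective P hR _)) M ‹_›

end Module

end IsDeltaFunctor

end DeltaFunctor

/-! ### Homology in the derived category -/

section Homology

open DerivedCategory

variable {A : Type*} [Category A] [Abelian A] [HasDerivedCategory.{w} A]

variable (A) in
lemma isDeltaFunctor_singleFunctor : IsDeltaFunctor (singleFunctor A 0) :=
  fun _ hS => ⟨_, hS.singleTriangle_distinguished⟩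

lemma IsWideSubcategory.isThickSubcategory_homology_mem {C : Set A} (hC : IsWideSubcategory C)
    (hne : C.Nonempty) :
    IsThickSubcategory {X : DerivedCategory A | ∀ n : ℤ, (homologyFunctor A n).obj X ∈ C} where
  mem_of_iso e h n := hC.mem_of_iso ((homologyFunctor A n).mapIso e) (h n)
  zero_mem n := hC.mem_of_isZero hne (Functor.map_isZero _ (isZero_zero _))
  shift_mem X n h k :=
    hC.mem_of_iso (((homologyFunctor A 0).shiftIso n k (n + k) rfl).app X).symm (h (n + k))
  ext₂ Δ hΔ h₁ h₃ n := hC.mem_of_exact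
    (HomologySequence.exact₁ Δ hΔ (n - 1) n) (HomologySequence.exact₂ Δ hΔ n)
    (HomologySequence.exact₃ Δ hΔ n (n + 1)) (h₃ _) (h₁ _) (h₃ _) (h₁ _)
  retract_mem _ _ i r h hY n :=
    hC.mem_of_retract ((Retract.mk i r h).map (homologyFunctor A n)) (hY n)

instance : (TStructure.t (C := A)).bounded.IsStableUnderRetracts where
  of_retract {X Y} r := by
    rintro ⟨⟨a, ha⟩, ⟨b, hb⟩⟩
    refine ⟨⟨a, (isGE_iff X a).2 fun i hi => ?_⟩, ⟨b, (isLE_iff X b).2 fun i hi => ?_⟩⟩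
    · exact IsZero.of_mono (r.map (homologyFunctor A i)).i ((isGE_iff Y a).1 ha i hi)
    · exact IsZero.of_mono (r.map (homologyFunctor A i)).i ((isLE_iff Y b).1 hb i hi)

variable (A) in
/-- The homology of a complex concentrated in degree `n`. -/
noncomputable def homologySingleIso (M : A) (n : ℤ) :
    (homologyFunctor A n).obj ((singleFunctor A n).obj M) ≅ M :=
  (homologyFunctorFactors A n).app _ ≪≫
    (HomologicalComplex.homologyFunctorSingleIso A (ComplexShape.up ℤ) n).app M

lemma isIso_homologyMap_mor₁_of_isGE {Δ : Triangle (DerivedCategory A)} (hΔ : Δ ∈ distTriang _)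
    {n b : ℤ} (hn : n < b) [Δ.obj₃.IsGE b] : IsIso ((homologyFunctor A n).map Δ.mor₁) := by
  have : Mono ((homologyFunctor A n).map Δ.mor₁) :=
    (HomologySequence.mono_homologyMap_mor₁_iff Δ hΔ (n - 1) n).2
      ((isZero_of_isGE _ b _ (by lia)).eq_of_src _ _)
  have : Epi ((homologyFunctor A n).map Δ.mor₁) :=
    (HomologySequence.epi_homologyMap_mor₁_iff Δ hΔ n).2
      ((isZero_of_isGE _ b _ hn).eq_of_tgt _ _)
  exact isIso_of_mono_of_epi _

lemma isIso_homologyMap_mor₂_of_isLE {Δ : Triangle (DerivedCategory A)} (hΔ : Δ ∈ distTriang _)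
    {n a : ℤ} (hn : a < n) [Δ.obj₁.IsLE a] : IsIso ((homologyFunctor A n).map Δ.mor₂) := by
  have : Mono ((homologyFunctor A n).map Δ.mor₂) :=
    (HomologySequence.mono_homologyMap_mor₂_iff Δ hΔ n).2
      ((isZero_of_isLE _ a _ hn).eq_of_src _ _)
  have : Epi ((homologyFunctor A n).map Δ.mor₂) :=
    (HomologySequence.epi_homologyMap_mor₂_iff Δ hΔ n (n + 1)).2
      ((isZero_of_isLE _ a _ (by lia)).eq_of_tgt _ _)
  exact isIso_of_mono_of_epi _

section Truncation

variable (P : ObjectProperty (DerivedCategory A)) [P.IsTriangulated]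
  [P.IsClosedUnderIsomorphisms]

lemma prop_singleFunctor_obj {M : A} (hM : P ((singleFunctor A 0).obj M)) (n : ℤ) :
    P ((singleFunctor A n).obj M) :=
  (P.prop_shift_iff_of_isStableUnderShift _ n).1
    (P.prop_of_iso (((singleFunctors A).shiftIso n 0 n (add_zero n)).app M).symm hM)

lemma prop_of_isGE_of_isLE_same (X : DerivedCategory A) (a : ℤ) [X.IsGE a] [X.IsLE a]
    (h : P ((singleFunctor A 0).obj ((homologyFunctor A a).obj X))) : P X := by
  obtain ⟨M, ⟨e⟩⟩ := exists_iso_singleFunctor_obj_of_isGE_of_isLE X a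
  exact P.prop_of_iso ((singleFunctor A a).mapIso
    ((homologyFunctor A a).mapIso e ≪≫ homologySingleIso A M a) ≪≫ e.symm)
    (prop_singleFunctor_obj P h a)

lemma prop_of_homology_of_isGE_of_isLE (k : ℕ) (X : DerivedCategory A) (a : ℤ) [X.IsGE a]
    [X.IsLE (a + k)] (h : ∀ n : ℤ, P ((singleFunctor A 0).obj ((homologyFunctor A n).obj X))) :
    P X := by
  induction k generalizing X a with
  | zero =>
    have : X.IsLE a := by simpa using ‹X.IsLE (a + (0 : ℕ))›
    exact prop_of_isGE_of_isLE_same P X a (h a)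
  | succ k ih =>
    have hΔ := TStructure.t.triangleLEGT_distinguished a X
    have hle : ((TStructure.t.triangleLEGT a).obj X).obj₁.IsLE a :=
      TStructure.t.isLE_truncLE_obj X a a
    have hgt : ((TStructure.t.triangleLEGT a).obj X).obj₃.IsGE (a + 1) :=
      TStructure.t.isGE_truncGT_obj X a (a + 1)
    refine P.ext_of_isTriangulatedClosed₂ _ hΔ ?_ ?_
    · have : ((TStructure.t.triangleLEGT a).obj X).obj₁.IsGE a :=
        inferInstanceAs (((TStructure.t.truncLE a).obj X).IsGE a)
      have hiso := isIso_homologyMap_mor₁_of_isGE hΔ (Int.lt_succ a)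
      exact prop_of_isGE_of_isLE_same P _ a (P.prop_of_iso
        ((singleFunctor A 0).mapIso (@asIso _ _ _ _ _ hiso).symm) (h a))
    · have : ((TStructure.t.triangleLEGT a).obj X).obj₃.IsLE (a + 1 + k) := by
        have : X.IsLE (a + 1 + k) := TStructure.t.isLE_of_le X (a + (k + 1 : ℕ)) _ (by lia)
        exact inferInstanceAs (((TStructure.t.truncGT a).obj X).IsLE (a + 1 + k))
      refine ih _ (a + 1) fun n => ?_
      rcases lt_or_ge a n with hn | hn
      · have hiso := isIso_homologyMap_mor₂_of_isLE hΔ hn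
        exact P.prop_of_iso ((singleFunctor A 0).mapIso (@asIso _ _ _ _ _ hiso)) (h n)
      · exact P.prop_of_isZero (Functor.map_isZero _ (isZero_of_isGE _ (a + 1) n (by lia)))

lemma prop_of_homology {X : DerivedCategory A} (hX : TStructure.t.bounded X)
    (h : ∀ n : ℤ, P ((singleFunctor A 0).obj ((homologyFunctor A n).obj X))) : P X := by
  obtain ⟨⟨a, ha⟩, ⟨b, hb⟩⟩ := hX
  have : X.IsLE (a + (b - a).toNat) := TStructure.t.isLE_of_le X b _ (by lia)
  exact prop_of_homology_of_isGE_of_isLE P (b - a).toNat X a h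

end Truncation

end Homology

/-! ### Small objects -/

section Small

open DerivedCategory

lemma IsWideSubcategory.homology_singleFunctor_mem {A : Type*} [Category A] [Abelian A]
    [HasDerivedCategory.{w} A] {C : Set A} (hC : IsWideSubcategory C) {M : A} (hM : M ∈ C)
    (n : ℤ) : (homologyFunctor A n).obj ((singleFunctor A 0).obj M) ∈ C := by
  rcases lt_trichotomy n 0 with hn | rfl | hn
  · exact hC.mem_of_isZero ⟨M, hM⟩ (isZero_of_isGE _ 0 n hn)
  · exact hC.mem_of_iso (homologySingleIso A M 0).symm hM
  · exact hC.mem_of_isZero ⟨M, hM⟩ (isZero_of_isLE _ 0 n hn)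

variable {R : Type u} [Ring R] [HasDerivedCategory.{w} (ModuleCat.{u} R)]

variable (R) in
lemma isThickSubcategory_setOf_isSmallObject :
    IsThickSubcategory {X : DerivedCategory (ModuleCat.{u} R) | IsSmallObject X} where
  mem_of_iso e hX D hD hR := hD.mem_of_iso e (hX D hD hR)
  zero_mem _ hD _ := hD.zero_mem
  shift_mem X n hX D hD hR := hD.shift_mem X n (hX D hD hR)
  ext₂ Δ hΔ h₁ h₃ D hD hR := hD.ext₂ Δ hΔ (h₁ D hD hR) (h₃ D hD hR)
  retract_mem X Y i r h hY D hD hR := hD.retract_mem X Y i r h (hY D hD hR)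

namespace IsSmallObject

variable {X : DerivedCategory (ModuleCat.{u} R)} (hX : IsSmallObject X)
include hX

lemma bounded : TStructure.t.bounded X :=
  hX _ (isThickSubcategory_setOf TStructure.t.bounded)
    ⟨⟨0, inferInstanceAs (((singleFunctor _ 0).obj (ModuleCat.of R R)).IsGE 0)⟩,
      ⟨0, inferInstanceAs (((singleFunctor _ 0).obj (ModuleCat.of R R)).IsLE 0)⟩⟩

lemma finitePresentation_homology (hR : IsLeftCoherentRing R) (n : ℤ) :
    Module.FinitePresentation R ((homologyFunctor (ModuleCat.{u} R) n).obj X) := by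
  have hRR : ModuleCat.of R R ∈ finPresModules R :=
    inferInstanceAs (Module.FinitePresentation R R)
  exact hX _ (hR.isWideSubcategory_finPresModules.isThickSubcategory_homology_mem ⟨_, hRR⟩)
    (hR.isWideSubcategory_finPresModules.homology_singleFunctor_mem hRR) n

end IsSmallObject

lemma IsRegularCoherentRing.isSmallObject_singleFunctor_obj (hR : IsRegularCoherentRing R)
    (M : ModuleCat.{u} R) [Module.FinitePresentation R M] :
    IsSmallObject ((singleFunctor (ModuleCat.{u} R) 0).obj M) := by
  have := (isThickSubcategory_setOf_isSmallObject R).isTriangulated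
  have := (isThickSubcategory_setOf_isSmallObject R).isStableUnderRetracts
  exact (isDeltaFunctor_singleFunctor (ModuleCat.{u} R)).prop_of_finitePresentation
    (· ∈ {X | IsSmallObject X}) hR
    (fun _ _ h => h) M

end Small

/-! ### Bounded above complexes of finitely generated projective modules -/

section StrictlyPseudoCoherent

open DerivedCategory

variable {R : Type u} [Ring R]

/-- A cochain complex is *strictly pseudo-coherent* if it is bounded above and its terms are
finitely generated projective modules. Small objects will be represented by such complexes. -/
structure IsStrictlyPseudoCoherent (K : CochainComplex (ModuleCat.{u} R) ℤ) : Prop where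
  finite (n : ℤ) : Module.Finite R (K.X n)
  projective (n : ℤ) : Module.Projective R (K.X n)
  exists_isZero : ∃ d : ℤ, ∀ n, d < n → IsZero (K.X n)

namespace IsStrictlyPseudoCoherent

variable {K L : CochainComplex (ModuleCat.{u} R) ℤ}

lemma shift (hK : IsStrictlyPseudoCoherent K) (a : ℤ) : IsStrictlyPseudoCoherent (K⟦a⟧) where
  finite n := hK.finite (n + a)
  projective n := hK.projective (n + a)
  exists_isZero := by
    obtain ⟨d, hd⟩ := hK.exists_isZero
    exact ⟨d - a, fun n hn => hd (n + a) (by lia)⟩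

lemma mappingCone (hK : IsStrictlyPseudoCoherent K) (hL : IsStrictlyPseudoCoherent L)
    (f : K ⟶ L) : IsStrictlyPseudoCoherent (CochainComplex.mappingCone f) := by
  have e (n : ℤ) := HomologicalComplex.homotopyCofiber.XIsoBiprod f n (n + 1) rfl
  have e' (n : ℤ) := (e n ≪≫ ModuleCat.biprodIsoProd _ _).symm.toLinearEquiv
  have hfin (n : ℤ) : Module.Finite R (K.X (n + 1) × L.X n) :=
    have := hK.finite (n + 1); have := hL.finite n; inferInstance
  have hproj (n : ℤ) : Module.Projective R (K.X (n + 1) × L.X n) :=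
    have := hK.projective (n + 1); have := hL.projective n; inferInstance
  refine ⟨fun n => (hfin n).equiv (e' n), fun n => (hproj n).of_equiv' (e' n), ?_⟩
  · obtain ⟨a, ha⟩ := hK.exists_isZero
    obtain ⟨b, hb⟩ := hL.exists_isZero
    exact ⟨max a b, fun n hn => ((biprod_isZero_iff _ _).2
      ⟨ha _ (by lia), hb _ (by lia)⟩).of_iso (e n)⟩

lemma single (M : ModuleCat.{u} R) [Module.Finite R M] [Module.Projective R M] :
    IsStrictlyPseudoCoherent ((CochainComplex.singleFunctor _ 0).obj M) := by
  have hzero (n : ℤ) (hn : n ≠ 0) : IsZero (((CochainComplex.singleFunctor _ 0).obj M).X n) :=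
    HomologicalComplex.isZero_single_obj_X _ _ _ _ hn
  have e := (HomologicalComplex.singleObjXSelf (ComplexShape.up ℤ) 0 M).symm.toLinearEquiv
  refine ⟨fun n => ?_, fun n => ?_, 0, fun n hn => hzero n hn.ne'⟩ <;>
    rcases eq_or_ne n 0 with rfl | hn
  · exact Module.Finite.equiv e
  · have := ModuleCat.subsingleton_of_isZero (hzero n hn)
    infer_instance
  · exact Module.Projective.of_equiv e
  · have := ModuleCat.subsingleton_of_isZero (hzero n hn)
    infer_instance

lemma isKProjective (hK : IsStrictlyPseudoCoherent K) : K.IsKProjective := by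
  obtain ⟨d, hd⟩ := hK.exists_isZero
  have := (CochainComplex.isStrictlyLE_iff K d).2 hd
  have (n : ℤ) : Projective (K.X n) := (IsProjective.iff_projective _).1 (hK.projective n)
  exact CochainComplex.isKProjective_of_projective K d

end IsStrictlyPseudoCoherent

lemma map_Q_surjective {A : Type*} [Category A] [Abelian A] [HasDerivedCategory.{w} A]
    (K L : CochainComplex A ℤ) [K.IsKProjective] :
    Function.Surjective (Q.map : (K ⟶ L) → _) := by
  intro f
  obtain ⟨g, hg⟩ := (CochainComplex.IsKProjective.Qh_map_bijective K
    ((HomotopyCategory.quotient _ _).obj L)).surjective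
    ((quotientCompQhIso _).hom.app K ≫ f ≫ (quotientCompQhIso _).inv.app L)
  obtain ⟨φ, rfl⟩ := (HomotopyCategory.quotient _ _).map_surjective g
  refine ⟨φ, ?_⟩
  rw [← cancel_epi ((quotientCompQhIso A).hom.app K), ← NatTrans.naturality]
  simp [hg]

variable [HasDerivedCategory.{w} (ModuleCat.{u} R)]

variable (R) in
/-- The objects of the derived category represented by strictly pseudo-coherent complexes. -/
def strictlyPseudoCoherent : ObjectProperty (DerivedCategory (ModuleCat.{u} R)) :=
  fun X => ∃ K, IsStrictlyPseudoCoherent K ∧ Nonempty (Q.obj K ≅ X)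

instance : (strictlyPseudoCoherent R).IsClosedUnderIsomorphisms where
  of_iso e := fun ⟨K, hK, ⟨e'⟩⟩ => ⟨K, hK, ⟨e' ≪≫ e⟩⟩

instance : (strictlyPseudoCoherent R).IsStableUnderShift ℤ where
  isStableUnderShiftBy n := ⟨fun _ ⟨K, hK, ⟨e⟩⟩ =>
    ⟨K⟦n⟧, hK.shift n, ⟨(Q.commShiftIso n).app K ≪≫ (shiftFunctor _ n).mapIso e⟩⟩⟩

lemma strictlyPseudoCoherent_single (M : ModuleCat.{u} R) [Module.Finite R M]
    [Module.Projective R M] : strictlyPseudoCoherent R ((singleFunctor _ 0).obj M) :=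
  ⟨_, .single M, ⟨Iso.refl _⟩⟩

lemma strictlyPseudoCoherent.ext₃ {Δ : Triangle (DerivedCategory (ModuleCat.{u} R))}
    (hΔ : Δ ∈ distTriang _) (h₁ : strictlyPseudoCoherent R Δ.obj₁)
    (h₂ : strictlyPseudoCoherent R Δ.obj₂) : strictlyPseudoCoherent R Δ.obj₃ := by
  obtain ⟨K, hK, ⟨e₁⟩⟩ := h₁
  obtain ⟨L, hL, ⟨e₂⟩⟩ := h₂
  have := hK.isKProjective
  obtain ⟨f, hf⟩ := map_Q_surjective K L (e₁.hom ≫ Δ.mor₁ ≫ e₂.inv)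
  have hcomm : Q.map f ≫ e₂.hom = e₁.hom ≫ Δ.mor₁ := by simp [hf]
  exact ⟨_, hK.mappingCone hL f, ⟨Triangle.π₃.mapIso (isoTriangleOfIso₁₂ _ Δ
    (mappingCone_triangle_distinguished f) hΔ e₁ e₂ hcomm)⟩⟩

instance : (strictlyPseudoCoherent R).IsTriangulated where
  exists_zero := ⟨_, (singleFunctor _ 0).map_isZero
    (ModuleCat.isZero_of_subsingleton (.of R PUnit)), strictlyPseudoCoherent_single _⟩
  ext₂' _ hΔ h₁ h₃ := ObjectProperty.le_isoClosure _ _ (strictlyPseudoCoherent.ext₃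
    (inv_rot_of_distTriang _ hΔ) ((strictlyPseudoCoherent R).le_shift (-1) _ h₃) h₁)

lemma IsSmallObject.strictlyPseudoCoherent (hR : IsRegularCoherentRing R)
    {X : DerivedCategory (ModuleCat.{u} R)} (hX : IsSmallObject X) :
    strictlyPseudoCoherent R X := by
  refine prop_of_homology _ hX.bounded fun n => ?_
  have := hX.finitePresentation_homology hR.isLeftCoherentRing n
  exact hR.finitePresentation_induction
    (Q := fun M => _root_.strictlyPseudoCoherent R ((singleFunctor _ 0).obj M))
    (fun M _ _ => strictlyPseudoCoherent_single M)
    (fun _ hS _ _ h => strictlyPseudoCoherent.ext₃ hS.singleTriangle_distinguished h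
      (strictlyPseudoCoherent_single _)) _ this

end StrictlyPseudoCoherent

/-! ### Tensoring a complex with a module -/

section Tensor

open DerivedCategory MonoidalCategory

variable {R : Type u} [CommRing R] (K : CochainComplex (ModuleCat.{u} R) ℤ)

/-- The functor `N ↦ K ⊗ N` from modules to complexes, for a complex `K`. -/
noncomputable def complexTensor : ModuleCat.{u} R ⥤ CochainComplex (ModuleCat.{u} R) ℤ where
  obj N := ((tensorRight N).mapHomologicalComplex _).obj K
  map f := (NatTrans.mapHomologicalComplex ((curriedTensor _).flip.map f) _).app K
  map_id N := by ext : 1; simp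
  map_comp f g := by ext : 1; simp

/-- The isomorphism `K ⊗ R ≅ K`. -/
noncomputable def complexTensorUnitIso : (complexTensor K).obj (.of R R) ≅ K :=
  HomologicalComplex.Hom.isoOfComponents (fun n => ρ_ (K.X n))
    fun i j _ => (rightUnitor_naturality (K.d i j)).symm

lemma isDeltaFunctor_complexTensor_comp_Q [HasDerivedCategory.{w} (ModuleCat.{u} R)]
    (hK : ∀ n, Module.Flat R (K.X n)) : IsDeltaFunctor (complexTensor K ⋙ Q) := by
  intro S hS
  have hexact : Function.Exact S.f.hom S.g.hom :=
    (ShortComplex.ShortExact.moduleCat_exact_iff_function_exact S).1 hS.exact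
  have hzero : (complexTensor K).map S.f ≫ (complexTensor K).map S.g = 0 := by
    rw [← Functor.map_comp, S.zero]
    ext n : 1
    exact MonoidalPreadditive.whiskerLeft_zero
  have hshort : (ShortComplex.mk _ _ hzero).ShortExact :=
    HomologicalComplex.shortExact_of_degreewise_shortExact _ fun n =>
      ModuleCat.shortComplex_shortExact _ (lTensor_exact (K.X n) hexact hS.moduleCat_surjective_g)
        (Module.Flat.lTensor_preserves_injective_linearMap S.f.hom hS.moduleCat_injective_f)
        (LinearMap.lTensor_surjective (K.X n) hS.moduleCat_surjective_g)
  exact ⟨_, triangleOfSES_distinguished hshort⟩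

variable {K} in
lemma exists_comp_complexTensor_eq_map_lsmul (N : ModuleCat.{u} R) (x : K.X 0) (φ : K.X 0 →ₗ[R] R)
    (hx : K.d 0 1 x ∈ Module.annihilator R N • (⊤ : Submodule R (K.X 1)))
    (hφ : ∀ y, φ (K.d (-1) 0 y) ∈ Module.annihilator R N) :
    ∃ (i : (HomologicalComplex.single _ _ 0).obj N ⟶ (complexTensor K).obj N)
      (r : (complexTensor K).obj N ⟶ (HomologicalComplex.single _ _ 0).obj N),
      i ≫ r = (HomologicalComplex.single _ _ 0).map
        (ModuleCat.ofHom (LinearMap.lsmul R N (φ x))) := by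
  let i₀ : N ⟶ ((complexTensor K).obj N).X 0 := ModuleCat.ofHom (TensorProduct.mk R (K.X 0) N x)
  let r₀ : ((complexTensor K).obj N).X 0 ⟶ N :=
    ModuleCat.ofHom (TensorProduct.lift (LinearMap.lsmul R N ∘ₗ φ))
  have hi₀ (k : ℤ) (hk : (ComplexShape.up ℤ).Rel 0 k) :
      i₀ ≫ ((complexTensor K).obj N).d 0 k = 0 := by
    obtain rfl : 0 + 1 = k := hk
    ext y
    change TensorProduct.tmul R (K.d 0 1 x) y = 0
    refine Submodule.smul_induction_on (p := fun c => TensorProduct.tmul R c y = 0) hx ?_ ?_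
    · intro r hr c _
      rw [TensorProduct.smul_tmul, Module.mem_annihilator.1 hr, TensorProduct.tmul_zero]
    · intro c c' h h'
      rw [TensorProduct.add_tmul, h, h', add_zero]
  have hr₀ (k : ℤ) (hk : (ComplexShape.up ℤ).Rel k 0) :
      ((complexTensor K).obj N).d k 0 ≫ r₀ = 0 := by
    obtain rfl : k = -1 := eq_neg_of_add_eq_zero_left hk
    exact ModuleCat.hom_ext (TensorProduct.ext' fun y => Module.mem_annihilator.1 (hφ y))
  refine ⟨HomologicalComplex.mkHomFromSingle i₀ hi₀, HomologicalComplex.mkHomToSingle r₀ hr₀,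
    HomologicalComplex.from_single_hom_ext ?_⟩
  rw [HomologicalComplex.comp_f, HomologicalComplex.mkHomFromSingle_f,
    HomologicalComplex.mkHomToSingle_f, HomologicalComplex.single_map_f_self, Category.assoc,
    ← Category.assoc i₀]
  rfl

end Tensor

/-! ### Maps into projective modules that fail to split at a prime -/

section ResidueField

open TensorProduct

lemma exists_linearMap_residueField_ne_zero {R M N : Type*} [CommRing R] [IsLocalRing R]
    [AddCommGroup M] [Module R M] [Module.Finite R M] [AddCommGroup N] [Module R N]
    [Module.Finite R N] [Module.Free R N] {f : M →ₗ[R] N} (hf : ¬ Function.Injective f) :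
    ∃ (x : M) (ψ : M →ₗ[R] IsLocalRing.ResidueField R), ψ x ≠ 0 ∧
      ∀ χ : N →ₗ[R] IsLocalRing.ResidueField R, χ (f x) = 0 := by
  let k := IsLocalRing.ResidueField R
  have hfk : ¬ Function.Injective (f.baseChange k) := fun h =>
    have ⟨g, hg⟩ := (IsLocalRing.split_injective_iff_lTensor_residueField_injective f).2 h
    hf (Function.LeftInverse.injective (LinearMap.congr_fun hg))
  obtain ⟨z, hz, hz₀⟩ : ∃ z, f.baseChange k z = 0 ∧ z ≠ 0 := by
    simpa [injective_iff_map_eq_zero] using hfk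
  obtain ⟨x, rfl⟩ := TensorProduct.mk_surjective R M k Ideal.Quotient.mk_surjective z
  obtain ⟨ψ, hψ⟩ : ∃ ψ : Module.Dual k (k ⊗[R] M), ψ (1 ⊗ₜ x) ≠ 0 := by
    by_contra! h
    exact hz₀ ((Module.forall_dual_apply_eq_zero_iff k _).1 h)
  refine ⟨x, ψ.restrictScalars R ∘ₗ TensorProduct.mk R k M 1, hψ, fun χ => ?_⟩
  simpa using congr(χ.liftBaseChange k $hz)

variable {R M N : Type*} [CommRing R] [AddCommGroup M] [Module R M] [AddCommGroup N] [Module R N]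

lemma mem_smul_top_of_forall_dual [Module.Finite R M] [Module.Projective R M] {I : Ideal R} {x : M}
    (h : ∀ φ : Module.Dual R M, φ x ∈ I) : x ∈ I • (⊤ : Submodule R M) := by
  obtain ⟨n, f, g, -, -, hfg⟩ := Module.Finite.exists_comp_eq_id_of_projective R M
  rw [← LinearMap.id_apply (R := R) x, ← hfg, LinearMap.comp_apply, pi_eq_sum_univ' (g x), map_sum]
  refine Submodule.sum_mem _ fun i _ => ?_
  rw [map_smul]
  exact Submodule.smul_mem_smul (h (LinearMap.proj i ∘ₗ g)) trivial

variable {P : Type*} [AddCommGroup P] [Module R P] [Module.Finite R P] [Module.Projective R P]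
  {f : N →ₗ[R] P} {p : PrimeSpectrum R}

lemma exists_linearMap_residueField_ne_zero_of_mem_support_ker [Module.Finite R N]
    (hp : p ∈ Module.support R (LinearMap.ker f)) :
    ∃ (x : N) (ψ : N →ₗ[R] p.asIdeal.ResidueField), ψ x ≠ 0 ∧
      ∀ χ : P →ₗ[R] p.asIdeal.ResidueField, χ (f x) = 0 := by
  let A := Localization.AtPrime p.asIdeal
  let ι : N →ₗ[R] A ⊗[R] N := TensorProduct.mk R A N 1
  have := Module.free_of_flat_of_isLocalRing (R := A) (P := A ⊗[R] P)
  have hf : ¬ Function.Injective (f.baseChange A) := fun h => by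
    obtain ⟨y, hy⟩ := Module.mem_support_iff'.1 hp
    have hιy : ι y = 0 := h (by simp [ι])
    obtain ⟨s, hs⟩ := (IsLocalizedModule.eq_zero_iff p.asIdeal.primeCompl ι).1 hιy
    exact hy s s.2 (Subtype.ext hs)
  obtain ⟨z, ψ, hψ, hz⟩ := exists_linearMap_residueField_ne_zero hf
  obtain ⟨⟨x, s⟩, hs : s.1 • z = ι x⟩ := IsLocalizedModule.surj p.asIdeal.primeCompl ι z
  have hs₀ : algebraMap R p.asIdeal.ResidueField s ≠ 0 :=
    Ideal.algebraMap_residueField_eq_zero.not.2 s.2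
  refine ⟨x, ψ.restrictScalars R ∘ₗ ι, ?_, fun χ => ?_⟩
  · rw [LinearMap.comp_apply, ← hs, map_smul, Algebra.smul_def]
    exact mul_ne_zero hs₀ hψ
  · have h : χ.liftBaseChange A (f.baseChange A (ι x)) = 0 := by
      rw [← hs, LinearMap.map_smul_of_tower, LinearMap.map_smul_of_tower, hz, smul_zero]
    simpa [ι] using h

lemma exists_dual_notMem_of_mem_support_ker [Module.Finite R M] [Module.Projective R M]
    {π : M →ₗ[R] N} (hπ : Function.Surjective π) (hp : p ∈ Module.support R (LinearMap.ker f)) :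
    ∃ (x : M) (φ : Module.Dual R M), φ x ∉ p.asIdeal ∧
      f (π x) ∈ p.asIdeal • (⊤ : Submodule R P) ∧ ∀ y, π y = 0 → φ y ∈ p.asIdeal := by
  let A := Localization.AtPrime p.asIdeal
  let k := p.asIdeal.ResidueField
  have := Module.Finite.of_surjective π hπ
  have := Module.finitePresentation_of_projective R M
  obtain ⟨x, ψ, hψ, hx⟩ := exists_linearMap_residueField_ne_zero_of_mem_support_ker hp
  obtain ⟨x, rfl⟩ := hπ x
  obtain ⟨g, hg⟩ := Module.projective_lifting_property (IsScalarTower.toAlgHom R A k).toLinearMap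
    (ψ ∘ₗ π) IsLocalRing.residue_surjective
  obtain ⟨φ, t, hφ⟩ := Module.FinitePresentation.exists_lift_of_isLocalizedModule
    p.asIdeal.primeCompl (Algebra.linearMap R A) g
  have ht₀ : algebraMap R k t ≠ 0 := Ideal.algebraMap_residueField_eq_zero.not.2 t.2
  have hφψ (y : M) : algebraMap R k (φ y) = t.1 • ψ (π y) :=
    calc
      _ = (IsScalarTower.toAlgHom R A k).toLinearMap (t.1 • g y) :=
        congr((IsScalarTower.toAlgHom R A k).toLinearMap ($hφ y))
      _ = t.1 • ψ (π y) := by rw [map_smul]; exact congr(t.1 • $hg y)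
  refine ⟨x, φ, ?_, mem_smul_top_of_forall_dual fun χ => ?_, fun y hy => ?_⟩
  all_goals rw [← Ideal.algebraMap_residueField_eq_zero]
  · rw [hφψ, Algebra.smul_def]
    exact mul_ne_zero ht₀ hψ
  · exact hx (Algebra.linearMap R k ∘ₗ χ)
  · rw [hφψ, hy, map_zero, smul_zero]

end ResidueField

/-! ### Finitely presented modules annihilated by an ideal -/

section Absorbs

lemma exists_fg_le_sup_of_le_sup {R M : Type*} [Ring R] [AddCommGroup M] [Module R M]
    {N L₁ L₂ : Submodule R M} (hN : N.FG) (h : N ≤ L₁ ⊔ L₂) :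
    ∃ L ≤ L₁, L.FG ∧ N ≤ L ⊔ L₂ := by
  induction N, hN using Submodule.fg_induction with
  | singleton x =>
    obtain ⟨y, hy, z, hz, rfl⟩ := Submodule.mem_sup.1 (h (Submodule.mem_span_singleton_self x))
    refine ⟨.span R {y}, by simpa using hy, Submodule.fg_span_singleton y, ?_⟩
    rw [Submodule.span_singleton_le_iff_mem]
    exact Submodule.add_mem_sup (Submodule.mem_span_singleton_self y) hz
  | sup N N' _ _ ih ih' =>
    obtain ⟨L, hL, hfg, hle⟩ := ih (le_sup_left.trans h)
    obtain ⟨L', hL', hfg', hle'⟩ := ih' (le_sup_right.trans h)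
    exact ⟨L ⊔ L', sup_le hL hL', hfg.sup hfg', sup_le
      (hle.trans (sup_le_sup_right le_sup_left _)) (hle'.trans (sup_le_sup_right le_sup_right _))⟩

lemma exists_fg_le_mem_smul_top {R M : Type*} [CommRing R] [AddCommGroup M] [Module R M]
    {I : Ideal R} {x : M} (hx : x ∈ I • (⊤ : Submodule R M)) :
    ∃ J ≤ I, J.FG ∧ x ∈ J • (⊤ : Submodule R M) := by
  refine Submodule.smul_induction_on hx (fun r hr m _ => ?_) ?_
  · exact ⟨Ideal.span {r}, (Ideal.span_singleton_le_iff_mem I).2 hr, Submodule.fg_span_singleton r,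
      Submodule.smul_mem_smul (Ideal.mem_span_singleton_self r) trivial⟩
  · rintro x y ⟨J, hJ, hfg, hx⟩ ⟨J', hJ', hfg', hy⟩
    exact ⟨J ⊔ J', sup_le hJ hJ', Submodule.FG.sup hfg hfg', add_mem
      (Submodule.smul_mono_left le_sup_left hx) (Submodule.smul_mono_left le_sup_right hy)⟩

variable {R : Type u} [CommRing R] {P : ObjectProperty (ModuleCat.{u} R)} {I : Ideal R}

/-- A property of modules *absorbs* an ideal `I` if it holds for all the finitely presented modules
annihilated by some fixed finitely generated ideal contained in `I`. Passing to a finitely generated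
ideal makes Zorn's lemma applicable to the ideals which are not absorbed. -/
def AbsorbsIdeal (P : ObjectProperty (ModuleCat.{u} R)) (I : Ideal R) : Prop :=
  ∃ J ≤ I, J.FG ∧ ∀ N : ModuleCat.{u} R, Module.FinitePresentation R N →
    J ≤ Module.annihilator R N → P N

namespace AbsorbsIdeal

lemma exists_fg_of_sup {I' : Ideal R} (h : AbsorbsIdeal P (I ⊔ I')) :
    ∃ J ≤ I, J.FG ∧ ∀ N : ModuleCat.{u} R, Module.FinitePresentation R N →
      J ⊔ I' ≤ Module.annihilator R N → P N := by
  obtain ⟨J', hJ', hfg', hP⟩ := h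
  obtain ⟨J, hJ, hfg, hle⟩ := exists_fg_le_sup_of_le_sup hfg' hJ'
  exact ⟨J, hJ, hfg, fun N hN hann => hP N hN (hle.trans hann)⟩

lemma isOka [P.IsClosedUnderExtensions] (hR : IsLeftCoherentRing R)
    (hP : ∀ N : ModuleCat.{u} R, Subsingleton N → P N) : Ideal.IsOka (AbsorbsIdeal P) where
  top := ⟨⊤, le_rfl, Ideal.fg_top R, fun N _ hN =>
    hP N (Module.annihilator_eq_top_iff.1 (top_le_iff.1 hN))⟩
  oka {I a} h h' := by
    obtain ⟨J, hJ, hfg, hJP⟩ := h.exists_fg_of_sup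
    obtain ⟨J', hJ', hfg', hJP'⟩ := h'
    refine ⟨J ⊔ Ideal.span {a} * J', sup_le hJ (Ideal.span_singleton_mul_le_iff.2 fun z hz => ?_),
      Submodule.FG.sup hfg (.mul (Submodule.fg_span_singleton a) hfg'), fun N _ hN => ?_⟩
    · exact mul_comm a z ▸ Submodule.mem_colon.1 (hJ' hz) a (Ideal.mem_span_singleton_self a)
    have hcolon {x : R} (hx : x ∈ J') (n : N) : x • a • n = 0 := by
      rw [smul_comm, ← mul_smul]
      exact Module.mem_annihilator.1 (hN (le_sup_right (a := J)
        (Ideal.mul_mem_mul (Ideal.mem_span_singleton_self a) hx))) n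
    let L := LinearMap.range (LinearMap.lsmul R N a)
    have hL : Module.FinitePresentation R L := (hR.isPseudoCoherent N).finitePresentation_range _
    refine P.prop_X₂_of_shortExact (ModuleCat.shortComplex_shortExact
      (.mk (ModuleCat.ofHom L.subtype) (ModuleCat.ofHom L.mkQ)
        (ModuleCat.hom_ext (LinearMap.exact_subtype_mkQ L).linearMap_comp_eq_zero))
      (LinearMap.exact_subtype_mkQ L) L.subtype_injective L.mkQ_surjective)
      (hJP' (.of R L) hL fun x hx => ?_)
      (hJP (.of R (N ⧸ L)) (Module.finitePresentation_of_surjective _ L.mkQ_surjective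
        (by rw [L.ker_mkQ]; exact Module.Finite.iff_fg.1 inferInstance)) ?_)
    · rw [Module.mem_annihilator]
      rintro ⟨_, n, rfl⟩
      exact Subtype.ext (hcolon hx n)
    · refine sup_le ((le_sup_left.trans hN).trans
        (L.mkQ.annihilator_le_of_surjective L.mkQ_surjective)) ?_
      rw [Ideal.span_singleton_le_iff_mem, Module.mem_annihilator]
      rintro ⟨n⟩
      exact (Submodule.Quotient.mk_eq_zero L).2 ⟨n, rfl⟩

lemma of_forall_isPrime (hP : Ideal.IsOka (AbsorbsIdeal P))
    (h : ∀ p : PrimeSpectrum R, I ≤ p.asIdeal →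
      ∃ a ∉ p.asIdeal, AbsorbsIdeal P (p.asIdeal ⊔ Ideal.span {a}) → AbsorbsIdeal P p.asIdeal) :
    AbsorbsIdeal P I := by
  by_contra hI
  have hchain : ∀ c ⊆ {I | ¬ AbsorbsIdeal P I}, IsChain (· ≤ ·) c → ∀ I ∈ c,
      ∃ I' ∈ {I | ¬ AbsorbsIdeal P I}, ∀ z ∈ c, z ≤ I' := by
    refine fun c hc hchain I hI => ⟨sSup c, ?_, fun _ => le_sSup⟩
    rintro ⟨J, hJ, hfg, hJP⟩
    obtain ⟨I', hI', hJI'⟩ := (CompleteLattice.isCompactElement_iff_le_of_directed_sSup_le _ J).1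
      ((Submodule.fg_iff_compact J).1 hfg) c ⟨I, hI⟩ hchain.directedOn hJ
    exact hc hI' ⟨J, hJI', hfg, hJP⟩
  obtain ⟨p, hIp, hmax⟩ := zorn_le_nonempty₀ _ hchain I hI
  obtain ⟨a, ha, hap⟩ := h ⟨p, hP.isPrime_of_maximal_not hmax⟩ hIp
  exact hmax.not_prop_of_gt (Submodule.lt_sup_iff_notMem.2 ha) fun hsup => hmax.prop (hap hsup)

end AbsorbsIdeal

end Absorbs

/-! ### Supports of homology modules -/

section Support

open DerivedCategory

variable {R : Type u} [CommRing R]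

lemma exists_dual_notMem_of_mem_support_homology {ι : Type*} {c : ComplexShape ι}
    (K : HomologicalComplex (ModuleCat.{u} R) c) {i j k : ι}
    [Module.Finite R (K.X j)] [Module.Projective R (K.X j)]
    [Module.Finite R (K.X k)] [Module.Projective R (K.X k)]
    {p : PrimeSpectrum R} (hp : p ∈ Module.support R (K.homology j)) :
    ∃ (x : K.X j) (φ : Module.Dual R (K.X j)), φ x ∉ p.asIdeal ∧
      K.d j k x ∈ p.asIdeal • (⊤ : Submodule R (K.X k)) ∧ ∀ y, φ (K.d i j y) ∈ p.asIdeal := by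
  have hι (z : K.homology j) : K.fromOpcycles j k (K.homologyι j z) = 0 :=
    congr($(K.homologyι_comp_fromOpcycles j k) z)
  have hker : p ∈ Module.support R (LinearMap.ker (K.fromOpcycles j k).hom) :=
    Module.support_subset_of_injective ((K.homologyι j).hom.codRestrict _ hι)
      ((LinearMap.injective_codRestrict_iff hι).2
        ((ModuleCat.mono_iff_injective _).1 inferInstance)) hp
  obtain ⟨x, φ, hφx, hx, hφ⟩ := exists_dual_notMem_of_mem_support_ker
    ((ModuleCat.epi_iff_surjective (K.pOpcycles j)).1 inferInstance) hker
  refine ⟨x, φ, hφx, ?_, fun y => hφ _ congr($(K.d_pOpcycles i j) y)⟩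
  rwa [← K.p_fromOpcycles j k]

lemma sup_span_singleton_le_annihilator_kernel_lsmul {N : ModuleCat.{u} R} {J : Ideal R}
    (hJ : J ≤ Module.annihilator R N) (a : R) :
    J ⊔ Ideal.span {a} ≤
      Module.annihilator R ↑(kernel (ModuleCat.ofHom (LinearMap.lsmul R N a))) := by
  have hinj := (ModuleCat.mono_iff_injective
    (kernel.ι (ModuleCat.ofHom (LinearMap.lsmul R N a)))).1 inferInstance
  refine sup_le (hJ.trans (LinearMap.annihilator_le_of_injective (ModuleCat.Hom.hom _) hinj)) ?_
  rw [Ideal.span_singleton_le_iff_mem, Module.mem_annihilator]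
  intro z
  refine hinj ?_
  rw [map_smul, map_zero]
  exact congr($(kernel.condition (ModuleCat.ofHom (LinearMap.lsmul R N a))) z)

lemma sup_span_singleton_le_annihilator_cokernel_lsmul {N : ModuleCat.{u} R} {J : Ideal R}
    (hJ : J ≤ Module.annihilator R N) (a : R) :
    J ⊔ Ideal.span {a} ≤
      Module.annihilator R ↑(cokernel (ModuleCat.ofHom (LinearMap.lsmul R N a))) := by
  have hsurj := (ModuleCat.epi_iff_surjective
    (cokernel.π (ModuleCat.ofHom (LinearMap.lsmul R N a)))).1 inferInstance
  refine sup_le (hJ.trans (LinearMap.annihilator_le_of_surjective (ModuleCat.Hom.hom _) hsurj)) ?_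
  rw [Ideal.span_singleton_le_iff_mem, Module.mem_annihilator]
  intro z
  obtain ⟨y, rfl⟩ := hsurj z
  rw [← map_smul]
  exact congr($(cokernel.condition (ModuleCat.ofHom (LinearMap.lsmul R N a))) y)

variable [HasDerivedCategory.{w} (ModuleCat.{u} R)]
  (P : ObjectProperty (DerivedCategory (ModuleCat.{u} R)))
  [P.IsTriangulated] [P.IsStableUnderRetracts] (hR : IsRegularCoherentRing R)
include hR

lemma prop_singleFunctor_obj_of_complexTensor {K : CochainComplex (ModuleCat.{u} R) ℤ}
    (hK : ∀ n, Module.Flat R (K.X n)) (hKP : P (Q.obj K)) (N : ModuleCat.{u} R)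
    [Module.FinitePresentation R N] {x : K.X 0} {φ : K.X 0 →ₗ[R] R}
    (hx : K.d 0 1 x ∈ Module.annihilator R N • (⊤ : Submodule R (K.X 1)))
    (hφ : ∀ y, φ (K.d (-1) 0 y) ∈ Module.annihilator R N)
    (hker : P ((singleFunctor _ 0).obj (kernel (ModuleCat.ofHom (LinearMap.lsmul R N (φ x))))))
    (hcoker : P ((singleFunctor _ 0).obj
      (cokernel (ModuleCat.ofHom (LinearMap.lsmul R N (φ x)))))) :
    P ((singleFunctor _ 0).obj N) := by
  obtain ⟨i, r, hir⟩ := exists_comp_complexTensor_eq_map_lsmul N x φ hx hφ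
  have hKN : P (Q.obj ((complexTensor K).obj N)) :=
    (isDeltaFunctor_complexTensor_comp_Q K hK).prop_of_finitePresentation P hR
      (P.prop_of_iso (Q.mapIso (complexTensorUnitIso K).symm) hKP) N
  let i' : (singleFunctor _ 0).obj N ⟶ Q.obj ((complexTensor K).obj N) := Q.map i
  let r' : Q.obj ((complexTensor K).obj N) ⟶ (singleFunctor _ 0).obj N := Q.map r
  have hir' : i' ≫ r' = (singleFunctor _ 0).map (ModuleCat.ofHom (LinearMap.lsmul R N (φ x))) :=
    (Q.map_comp i r).symm.trans (congrArg Q.map hir)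
  refine prop_of_trW_comp P i' r' hKN ?_
  rw [hir']
  exact (isDeltaFunctor_singleFunctor _).trW_map P _ hker hcoker

lemma exists_notMem_absorbsIdeal_of_absorbsIdeal_sup {K : CochainComplex (ModuleCat.{u} R) ℤ}
    (hK : IsStrictlyPseudoCoherent K) (hKP : P (Q.obj K)) {p : PrimeSpectrum R}
    (hp : p ∈ Module.support R (K.homology 0)) :
    ∃ a ∉ p.asIdeal,
      AbsorbsIdeal (P.inverseImage (singleFunctor _ 0)) (p.asIdeal ⊔ Ideal.span {a}) →
        AbsorbsIdeal (P.inverseImage (singleFunctor _ 0)) p.asIdeal := by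
  have := hK.finite
  have := hK.projective
  obtain ⟨x, φ, hφx, hx, hφ⟩ :=
    exists_dual_notMem_of_mem_support_homology K (i := -1) (k := 1) hp
  obtain ⟨J₁, hJ₁, hfg₁, hx⟩ := exists_fg_le_mem_smul_top hx
  let J₂ : Ideal R := LinearMap.range (φ ∘ₗ (K.d (-1) 0).hom)
  have hJ₂ : J₂ ≤ p.asIdeal := LinearMap.range_le_iff_comap.2 (top_le_iff.1 fun y _ => hφ y)
  have hfg₂ : J₂.FG := Module.Finite.iff_fg.1 inferInstance
  refine ⟨φ x, hφx, fun h => ?_⟩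
  obtain ⟨J₃, hJ₃, hfg₃, hJP⟩ := h.exists_fg_of_sup
  refine ⟨J₁ ⊔ J₂ ⊔ J₃, sup_le (sup_le hJ₁ hJ₂) hJ₃,
    Submodule.FG.sup (Submodule.FG.sup hfg₁ hfg₂) hfg₃,
    fun N hN hann => ?_⟩
  obtain ⟨⟨h₁, h₂⟩, h₃⟩ : (J₁ ≤ _ ∧ J₂ ≤ _) ∧ J₃ ≤ _ := by simpa only [sup_le_iff] using hann
  have hwide := hR.isLeftCoherentRing.isWideSubcategory_finPresModules
  exact prop_singleFunctor_obj_of_complexTensor P hR (fun n => inferInstance) hKP N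
    (Submodule.smul_mono_left h₁ hx) (fun y => h₂ ⟨y, rfl⟩)
    (hJP _ (hwide.kernel_mem _ hN hN) (sup_span_singleton_le_annihilator_kernel_lsmul h₃ _))
    (hJP _ (hwide.cokernel_mem _ hN hN) (sup_span_singleton_le_annihilator_cokernel_lsmul h₃ _))

end Support

/-! ### Thick subcategories are determined by their support -/

section HomologySupport

open DerivedCategory

variable {R : Type u} [CommRing R] [HasDerivedCategory.{w} (ModuleCat.{u} R)]
  {D : Set (DerivedCategory (ModuleCat.{u} R))}

/-- The support of a collection `D` of objects of the derived category: the primes at which some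
homology module of some object of `D` does not vanish. -/
def homologySupport (D : Set (DerivedCategory (ModuleCat.{u} R))) : Set (PrimeSpectrum R) :=
  {p | ∃ X ∈ D, ∃ n : ℤ, p ∈ Module.support R ((homologyFunctor (ModuleCat.{u} R) n).obj X)}

lemma IsThickSubcategory.exists_Q_obj_mem_of_mem_homologySupport (hR : IsRegularCoherentRing R)
    (hD : IsThickSubcategory D) (hsmall : ∀ X ∈ D, IsSmallObject X) {p : PrimeSpectrum R}
    (hp : p ∈ homologySupport D) :
    ∃ K, IsStrictlyPseudoCoherent K ∧ Q.obj K ∈ D ∧ p ∈ Module.support R (K.homology 0) := by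
  obtain ⟨X, hX, n, hp⟩ := hp
  obtain ⟨K, hK, ⟨e⟩⟩ := (hsmall _ (hD.shift_mem X n hX)).strictlyPseudoCoherent hR
  let eH : K.homology 0 ≅ (homologyFunctor (ModuleCat.{u} R) n).obj X :=
    ((homologyFunctorFactors _ 0).app K).symm ≪≫ (homologyFunctor _ 0).mapIso e ≪≫
      ((homologyFunctor (ModuleCat.{u} R) 0).shiftIso n 0 n (add_zero n)).app X
  exact ⟨K, hK, hD.mem_of_iso e.symm (hD.shift_mem X n hX), eH.toLinearEquiv.support_eq ▸ hp⟩

theorem IsThickSubcategory.singleFunctor_obj_mem_of_support_subset (hR : IsRegularCoherentRing R)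
    (hD : IsThickSubcategory D) (hsmall : ∀ X ∈ D, IsSmallObject X) (N : ModuleCat.{u} R)
    [Module.FinitePresentation R N] (hN : Module.support R N ⊆ homologySupport D) :
    (singleFunctor (ModuleCat.{u} R) 0).obj N ∈ D := by
  let P : ObjectProperty (DerivedCategory (ModuleCat.{u} R)) := (· ∈ D)
  have : P.IsTriangulated := hD.isTriangulated
  have : P.IsStableUnderRetracts := hD.isStableUnderRetracts
  let PR : ObjectProperty (ModuleCat.{u} R) := P.inverseImage (singleFunctor _ 0)
  have : PR.IsClosedUnderExtensions := ⟨fun hS => (isDeltaFunctor_singleFunctor _).prop₂ P hS⟩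
  have hOka : Ideal.IsOka (AbsorbsIdeal PR) := AbsorbsIdeal.isOka hR.isLeftCoherentRing
    fun M _ => P.prop_of_isZero (Functor.map_isZero _ (ModuleCat.isZero_of_subsingleton M))
  have hann : AbsorbsIdeal PR (Module.annihilator R N) := .of_forall_isPrime hOka fun p hp => by
    obtain ⟨K, hK, hKD, hpK⟩ := hD.exists_Q_obj_mem_of_mem_homologySupport hR hsmall
      (hN (Module.mem_support_iff_of_finite.2 hp))
    exact exists_notMem_absorbsIdeal_of_absorbsIdeal_sup P hR hK hKD hpK
  obtain ⟨J, hJ, -, hJP⟩ := hann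
  exact hJP N ‹_› hJ

end HomologySupport

/-! ### Wide subcategories defined by vanishing of supports -/

section SupportVanishing

variable {R : Type u} [CommRing R]

lemma mem_supportVanishing_iff {S : Set (PrimeSpectrum R)} {M : ModuleCat.{u} R} :
    M ∈ supportVanishing R S ↔ M ∈ finPresModules R ∧ Module.support R M ⊆ Sᶜ := by
  rw [Set.subset_compl_comm]
  exact and_congr_right' (forall₂_congr fun _ _ => Module.notMem_support_iff.symm)

lemma supportVanishing_mem_wideLatticeFP (hR : IsLeftCoherentRing R) (S : Set (PrimeSpectrum R)) :
    supportVanishing R S ∈ wideLatticeFP R := by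
  have hfp := hR.isWideSubcategory_finPresModules
  refine ⟨⟨?_, ?_, ?_, ?_⟩, ⟨.of R PUnit.{u + 1}, ?_⟩, fun M hM => hM.1⟩
  all_goals simp only [mem_supportVanishing_iff]
  · rintro X Y e ⟨hX, hXS⟩
    exact ⟨hfp.mem_of_iso e hX, e.toLinearEquiv.support_eq ▸ hXS⟩
  · rintro X Y f ⟨hX, hXS⟩ ⟨hY, -⟩
    exact ⟨hfp.kernel_mem f hX hY, (Module.support_subset_of_injective (kernel.ι f).hom
      ((ModuleCat.mono_iff_injective _).1 inferInstance)).trans hXS⟩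
  · rintro X Y f ⟨hX, -⟩ ⟨hY, hYS⟩
    exact ⟨hfp.cokernel_mem f hX hY, (Module.support_subset_of_surjective (cokernel.π f).hom
      ((ModuleCat.epi_iff_surjective _).1 inferInstance)).trans hYS⟩
  · rintro T hT ⟨h₁, h₁S⟩ ⟨h₃, h₃S⟩
    have hexact := (ShortComplex.ShortExact.moduleCat_exact_iff_function_exact T).1 hT.exact
    refine ⟨hfp.extension_mem T hT h₁ h₃, ?_⟩
    rw [Module.support_of_exact hexact hT.moduleCat_injective_f hT.moduleCat_surjective_g]
    exact Set.union_subset h₁S h₃S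
  · refine ⟨inferInstanceAs (Module.FinitePresentation R PUnit.{u + 1}), ?_⟩
    exact (Module.support_eq_empty (M := PUnit.{u + 1})).trans_subset (Set.empty_subset _)

lemma supportVanishing_subset_supportVanishing_iff {S T : Set (PrimeSpectrum R)}
    (hS : S ∈ tildeJ R) : supportVanishing R S ⊆ supportVanishing R T ↔ T ⊆ S := by
  refine ⟨fun h => ?_, fun h M hM => ⟨hM.1, fun p hp => hM.2 p (h hp)⟩⟩
  obtain ⟨𝒰, h𝒰, rfl⟩ := hS
  refine Set.subset_sInter fun U hU => ?_
  obtain ⟨I, hI, rfl⟩ := PrimeSpectrum.isCompact_isOpen_iff_ideal.1 (h𝒰 U hU).symm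
  have hsupp : Module.support R (R ⧸ I) = PrimeSpectrum.zeroLocus I := by
    rw [Module.support_eq_zeroLocus, Ideal.annihilator_quotient]
  have hmem : ModuleCat.of R (R ⧸ I) ∈ supportVanishing R (⋂₀ 𝒰) :=
    mem_supportVanishing_iff.2 ⟨Module.finitePresentation_of_surjective I.mkQ I.mkQ_surjective
      (by rwa [I.ker_mkQ]), hsupp.trans_subset
        (Set.subset_compl_comm.2 (Set.sInter_subset_of_mem hU))⟩
  rw [Set.subset_compl_comm, ← hsupp]
  exact (mem_supportVanishing_iff.1 (h hmem)).2

lemma IsLeftCoherentRing.fg_annihilator (hR : IsLeftCoherentRing R) (M : Type*) [AddCommGroup M]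
    [Module R M] [Module.FinitePresentation R M] : (Module.annihilator R M).FG := by
  obtain ⟨n, s, hs⟩ := Module.Finite.exists_fin (R := R) (M := M)
  let f : R →ₗ[R] Fin n → M := LinearMap.pi fun i => LinearMap.toSpanSingleton R M (s i)
  have hker : Module.annihilator R M = LinearMap.ker f := by
    ext r
    rw [← Submodule.annihilator_top, ← hs, Submodule.mem_annihilator_span]
    simp [f, funext_iff]
  exact hker ▸ hR.fg_ker f

lemma IsLeftCoherentRing.isOpen_isCompact_compl_support (hR : IsLeftCoherentRing R)
    (M : Type*) [AddCommGroup M] [Module R M] [Module.FinitePresentation R M] :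
    IsOpen (Module.support R M)ᶜ ∧ IsCompact (Module.support R M)ᶜ :=
  (PrimeSpectrum.isCompact_isOpen_iff_ideal.2
    ⟨_, hR.fg_annihilator M, by rw [Module.support_eq_zeroLocus]⟩).symm

end SupportVanishing

/-! ### The classification -/

section Classification

open DerivedCategory

variable {R : Type u} [CommRing R] [HasDerivedCategory.{w} (ModuleCat.{u} R)]
  {C C' : Set (ModuleCat.{u} R)} {D : Set (DerivedCategory (ModuleCat.{u} R))}

lemma IsWideSubcategory.fSet_mem_thickLatticeSmall (hC : IsWideSubcategory C) (hne : C.Nonempty) :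
    fSet C ∈ thickLatticeSmall R :=
  ⟨(isThickSubcategory_setOf_isSmallObject R).inter (hC.isThickSubcategory_homology_mem hne),
    fun _ hX => hX.1⟩

lemma singleFunctor_obj_mem_fSet_iff (hR : IsRegularCoherentRing R) (hC : C ∈ wideLatticeFP R)
    {M : ModuleCat.{u} R} : (singleFunctor (ModuleCat.{u} R) 0).obj M ∈ fSet C ↔ M ∈ C := by
  refine ⟨fun h => hC.1.mem_of_iso (homologySingleIso _ M 0) (h.2 0), fun h => ?_⟩
  have : Module.FinitePresentation R M := hC.2.2 h
  exact ⟨hR.isSmallObject_singleFunctor_obj M, hC.1.homology_singleFunctor_mem h⟩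

lemma fSet_subset_fSet_iff (hR : IsRegularCoherentRing R) (hC : C ∈ wideLatticeFP R)
    (hC' : C' ∈ wideLatticeFP R) : fSet C ⊆ fSet C' ↔ C ⊆ C' := by
  refine ⟨fun h M hM => ?_, fun h X hX => ⟨hX.1, fun n => h (hX.2 n)⟩⟩
  exact (singleFunctor_obj_mem_fSet_iff hR hC').1
    (h ((singleFunctor_obj_mem_fSet_iff hR hC).2 hM))

lemma compl_homologySupport_mem_tildeJ (hR : IsLeftCoherentRing R)
    (hD : ∀ X ∈ D, IsSmallObject X) : (homologySupport D)ᶜ ∈ tildeJ R := by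
  refine ⟨{U | ∃ X ∈ D, ∃ n : ℤ,
    (Module.support R ((homologyFunctor (ModuleCat.{u} R) n).obj X))ᶜ = U}, ?_, ?_⟩
  · rintro _ ⟨X, hX, n, rfl⟩
    have := (hD X hX).finitePresentation_homology hR n
    exact hR.isOpen_isCompact_compl_support _
  · ext p
    refine ⟨?_, fun hp ⟨X, hX, n, hpX⟩ => hp _ ⟨X, hX, n, rfl⟩ hpX⟩
    rintro hp _ ⟨X, hX, n, rfl⟩ hpX
    exact hp ⟨X, hX, n, hpX⟩

theorem fSet_supportVanishing_compl_homologySupport (hR : IsRegularCoherentRing R)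
    (hD : D ∈ thickLatticeSmall R) : fSet (supportVanishing R (homologySupport D)ᶜ) = D := by
  obtain ⟨hthick, hsmall⟩ := hD
  ext X
  refine ⟨fun ⟨hX, hXS⟩ => ?_, fun hX => ⟨hsmall X hX, fun n => ?_⟩⟩
  · have := hthick.isTriangulated
    have := hthick.isStableUnderRetracts
    refine prop_of_homology (A := ModuleCat.{u} R) (· ∈ D) hX.bounded fun n => ?_
    obtain ⟨hfp, hsupp⟩ := mem_supportVanishing_iff.1 (hXS n)
    have : Module.FinitePresentation R ((homologyFunctor (ModuleCat.{u} R) n).obj X) := hfp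
    exact hthick.singleFunctor_obj_mem_of_support_subset hR hsmall _
      (compl_compl (homologySupport D) ▸ hsupp)
  · refine mem_supportVanishing_iff.2
      ⟨(hsmall X hX).finitePresentation_homology hR.isLeftCoherentRing n, ?_⟩
    rw [compl_compl]
    exact fun p hp => ⟨X, hX, n, hp⟩

theorem supportVanishing_compl_homologySupport_fSet (hR : IsRegularCoherentRing R)
    (hC : C ∈ wideLatticeFP R) : supportVanishing R (homologySupport (fSet C))ᶜ = C := by
  have h := fSet_supportVanishing_compl_homologySupport hR
    (hC.1.fSet_mem_thickLatticeSmall hC.2.1)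
  have hwide := supportVanishing_mem_wideLatticeFP hR.isLeftCoherentRing
    (homologySupport (fSet C))ᶜ
  exact Set.Subset.antisymm ((fSet_subset_fSet_iff hR hwide hC).1 h.subset)
    ((fSet_subset_fSet_iff hR hC hwide).1 h.superset)

end Classification

/-- Theorem 3.6: for a regular commutative coherent ring `R`, the map
`f` is a lattice isomorphism from the lattice of wide subcategories of finitely presented
`R`-modules onto the lattice of thick subcategories of small objects of `D(R)`.
Consequently the map `S ↦ {finitely presented M | M_{(p)} = 0 for all p ∈ S}` is an
isomorphism from `J̃(Spec R)`, with order reversed, onto the lattice of wide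
subcategories of finitely presented `R`-modules. -/
theorem classification_regular_coherent (R : Type u) [CommRing R]
    [HasDerivedCategory.{w} (ModuleCat.{u} R)]
    (hcoh : IsLeftCoherentRing R)
    (hreg : ∀ M : ModuleCat.{u} R, Module.FinitePresentation R M →
      HasFiniteProjectiveDimension R M) :
    fIsLatticeIso R ∧
    (∀ S ∈ tildeJ R, supportVanishing R S ∈ wideLatticeFP R) ∧
    (∀ S ∈ tildeJ R, ∀ T ∈ tildeJ R,
      (supportVanishing R S ⊆ supportVanishing R T ↔ T ⊆ S)) ∧
    (∀ C ∈ wideLatticeFP R, ∃ S ∈ tildeJ R, supportVanishing R S = C) := by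
  have hR : IsRegularCoherentRing R := ⟨hcoh, hreg⟩
  have hthick : ∀ C ∈ wideLatticeFP R, fSet C ∈ thickLatticeSmall R :=
    fun C hC => hC.1.fSet_mem_thickLatticeSmall hC.2.1
  have hwide : ∀ S, supportVanishing R S ∈ wideLatticeFP R :=
    supportVanishing_mem_wideLatticeFP hcoh
  refine ⟨⟨hthick, fun C₁ h₁ C₂ h₂ => fSet_subset_fSet_iff hR h₁ h₂, fun D hD => ?_⟩,
    fun S _ => hwide S, fun S hS T _ => supportVanishing_subset_supportVanishing_iff hS,
    fun C hC => ?_⟩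
  · exact ⟨_, hwide _, fSet_supportVanishing_compl_homologySupport hR hD⟩
  · exact ⟨_, compl_homologySupport_mem_tildeJ hcoh (hthick C hC).2,
      supportVanishing_compl_homologySupport_fSet hR hC⟩
end

section
/- Let R be a left coherent ring and let a be a two-sided ideal of R that is finitely generated as a left ideal. Let u send a wide subcategory C of finitely presented R/a-modules to the wide subcategory of R-modules generated by the modules of C regarded as R-modules via restriction along R → R/a. Then u is an embedding of the lattice of wide subcategories of finitely presented R/a-modules into the lattice of wide subcategories of C_0(R): for every wide subcategory C of finitely presented R/a-modules, an R-module M in u(C) on which a acts trivially lies in C (so vu(C) = C, where v(D) = {M ∈ D : aM = 0}). -/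
open CategoryTheory CategoryTheory.Limits CategoryTheory.Pretriangulated ZeroObject

universe w u

/-!
Let `P` be a class of objects closed under kernels and cokernels. Its extension closure is wide: by
the exact sequence `0 ⟶ ker f ⟶ ker fg ⟶ ker g ⟶ coker f ⟶ coker fg ⟶ coker g ⟶ 0`, the
kernel and cokernel of a morphism can be handled by induction on the way its source, and then its
target, is built up by extensions. Hence the wide closure of the image of `C` consists of iterated
extensions of objects in the image. If such an iterated extension is a module `N` killed by `ker π`,
then so are all the subquotients involved, so the extensions take place among `S`-modules and `N`
lies in `C`.
-/

section ExactSequences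

variable {A : Type*} [Category A] [Abelian A]

theorem shortExact_kernelLift {W X Y Z : A} {f : W ⟶ X} {g : X ⟶ Y} {h : Y ⟶ Z} [Mono f]
    {hfg : f ≫ g = 0} (hf : (ShortComplex.mk f g hfg).Exact)
    {hgh : g ≫ h = 0} (hg : (ShortComplex.mk g h hgh).Exact) :
    (ShortComplex.mk f (kernel.lift h g hgh) (by ext; simpa using hfg)).ShortExact where
  exact := by
    let φ : ShortComplex.mk f (kernel.lift h g hgh) (by ext; simpa using hfg) ⟶
        ShortComplex.mk f g hfg := { τ₁ := 𝟙 _, τ₂ := 𝟙 _, τ₃ := kernel.ι h }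
    exact (ShortComplex.exact_iff_of_epi_of_isIso_of_mono φ).2 hf
  epi_g := hg.epi_kernelLift

theorem shortExact_cokernelDesc {W X Y Z : A} {f : W ⟶ X} {g : X ⟶ Y} {h : Y ⟶ Z} [Epi h]
    {hfg : f ≫ g = 0} (hf : (ShortComplex.mk f g hfg).Exact)
    {hgh : g ≫ h = 0} (hg : (ShortComplex.mk g h hgh).Exact) :
    (ShortComplex.mk (cokernel.desc f g hfg) h (by ext; simpa using hgh)).ShortExact where
  exact := by
    let φ : ShortComplex.mk g h hgh ⟶
        ShortComplex.mk (cokernel.desc f g hfg) h (by ext; simpa using hgh) :=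
      { τ₁ := cokernel.π f, τ₂ := 𝟙 _, τ₃ := 𝟙 _ }
    exact (ShortComplex.exact_iff_of_epi_of_isIso_of_mono φ).1 hg
  mono_f := hf.mono_cokernelDesc

variable {X Y Z : A} (f : X ⟶ Y) (g : Y ⟶ Z)

/-- The part `0 ⟶ ker f ⟶ ker (f ≫ g) ⟶ ker g` of the kernel-cokernel sequence, as an
isomorphism. -/
noncomputable def kernelKernelMapIso :
    kernel (kernel.map (f ≫ g) g f (𝟙 _) (by simp)) ≅ kernel f :=
  (kernelIsKernel _).conePointUniqueUpToIso
    ((kernelCokernelCompSequence_exact f g).exact 0).fIsKernel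

/-- The part `coker f ⟶ coker (f ≫ g) ⟶ coker g ⟶ 0` of the kernel-cokernel sequence, as an
isomorphism. -/
noncomputable def cokernelCokernelMapIso :
    cokernel (cokernel.map f (f ≫ g) (𝟙 _) g (by simp)) ≅ cokernel g :=
  (cokernelIsCokernel _).coconePointUniqueUpToIso
    (kernelCokernelCompSequence_exact f g |>.exact 3).gIsCokernel

variable (P : ObjectProperty A) [P.IsClosedUnderExtensions]

theorem prop_kernel_of_prop_kernel_comp [Mono f] (h : P (kernel (f ≫ g)))
    (h' : P (kernel (cokernel.map f (f ≫ g) (𝟙 _) g (by simp)))) : P (kernel g) :=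
  P.prop_X₂_of_shortExact (shortExact_kernelLift (f := kernel.map (f ≫ g) g f (𝟙 _) (by simp))
    ((kernelCokernelCompSequence_exact f g).exact 1)
    ((kernelCokernelCompSequence_exact f g).exact 2)) h h'

theorem prop_cokernel_of_prop_cokernel_comp [Epi g] (h : P (cokernel (f ≫ g)))
    (h' : P (cokernel (kernel.map (f ≫ g) g f (𝟙 _) (by simp)))) : P (cokernel f) :=
  P.prop_X₂_of_shortExact (shortExact_cokernelDesc (h := cokernel.map f (f ≫ g) (𝟙 _) g (by simp))
    ((kernelCokernelCompSequence_exact f g).exact 1)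
    ((kernelCokernelCompSequence_exact f g).exact 2)) h' h

end ExactSequences

/-- The smallest class of objects that contains `P` and is closed under extensions. It has no
constructor for isomorphisms: closure under them is inherited from `P`. -/
inductive extensionClosure {A : Type*} [Category A] [HasZeroMorphisms A] (P : ObjectProperty A) :
    ObjectProperty A
  | of_prop {X : A} (hX : P X) : extensionClosure P X
  | of_shortExact {S : ShortComplex A} (hS : S.ShortExact)
      (h₁ : extensionClosure P S.X₁) (h₃ : extensionClosure P S.X₃) : extensionClosure P S.X₂

namespace extensionClosure

section

variable {A : Type*} [Category A] [HasZeroMorphisms A] (P : ObjectProperty A)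

instance : (extensionClosure P).IsClosedUnderExtensions where
  prop_X₂_of_shortExact := of_shortExact

instance [P.IsClosedUnderIsomorphisms] : (extensionClosure P).IsClosedUnderIsomorphisms where
  of_iso := by
    rintro _ Y e (hX | @⟨S, hS, h₁, h₃⟩)
    · exact of_prop (P.prop_of_iso e hX)
    · let T : ShortComplex A := .mk (S.f ≫ e.hom) (e.inv ≫ S.g) (by simp)
      have i : S ≅ T := ShortComplex.isoMk (Iso.refl _) e (Iso.refl _)
      exact of_shortExact (S := T) (ShortComplex.shortExact_of_iso i hS) h₁ h₃

end

variable {A : Type*} [Category A] [Abelian A] {P : ObjectProperty A}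
  [P.IsClosedUnderKernels] [P.IsClosedUnderCokernels] [P.IsClosedUnderIsomorphisms]

-- The cokernel lies in `P` itself, not just in its extension closure: the induction on `X` applies
-- the hypothesis for the quotient to a morphism whose target is the cokernel on the subobject.
theorem kernel_and_cokernel_of_prop {X Y : A} (hX : extensionClosure P X) (hY : P Y)
    (f : X ⟶ Y) : extensionClosure P (kernel f) ∧ P (cokernel f) := by
  induction hX generalizing Y with
  | of_prop hX => exact ⟨of_prop (P.prop_kernel f hX hY), P.prop_cokernel f hX hY⟩
  | @of_shortExact S hS _ _ ih₁ ih₃ =>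
    have := hS.mono_f
    have := hS.epi_g
    let e : S.X₃ ≅ cokernel S.f :=
      hS.gIsCokernel.coconePointUniqueUpToIso (colimit.isColimit _)
    let φ := cokernel.map S.f (S.f ≫ f) (𝟙 _) f (by simp)
    obtain ⟨hker₁, hcoker₁⟩ := ih₁ hY (S.f ≫ f)
    obtain ⟨hker₃, hcoker₃⟩ := ih₃ hcoker₁ (e.hom ≫ φ)
    have hkerφ : extensionClosure P (kernel φ) :=
      ObjectProperty.prop_of_iso _ (kernelIsIsoComp e.hom φ) hker₃
    exact ⟨prop_kernel_of_prop_kernel_comp S.f f _ hker₁ hkerφ,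
      P.prop_of_iso (cokernelEpiComp e.hom φ ≪≫ cokernelCokernelMapIso S.f f) hcoker₃⟩

theorem kernel_and_cokernel {X Y : A} (hX : extensionClosure P X) (hY : extensionClosure P Y)
    (f : X ⟶ Y) : extensionClosure P (kernel f) ∧ extensionClosure P (cokernel f) := by
  induction hY generalizing X with
  | of_prop hY => exact (kernel_and_cokernel_of_prop hX hY f).imp_right of_prop
  | @of_shortExact S hS _ _ ih₁ ih₃ =>
    have := hS.mono_f
    have := hS.epi_g
    let e : kernel S.g ≅ S.X₁ := (kernelIsKernel S.g).conePointUniqueUpToIso hS.fIsKernel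
    let φ := kernel.map (f ≫ S.g) S.g f (𝟙 _) (by simp)
    obtain ⟨hker₃, hcoker₃⟩ := ih₃ hX (f ≫ S.g)
    obtain ⟨hker₁, hcoker₁⟩ := ih₁ hker₃ (φ ≫ e.hom)
    have hcokerφ : extensionClosure P (cokernel φ) :=
      ObjectProperty.prop_of_iso _ (cokernelCompIsIso φ e.hom) hcoker₁
    exact ⟨ObjectProperty.prop_of_iso _ (kernelCompMono φ e.hom ≪≫ kernelKernelMapIso f S.g) hker₁,
      prop_cokernel_of_prop_cokernel_comp f S.g _ hcoker₃ hcokerφ⟩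

variable (P) in
theorem isWideSubcategory : IsWideSubcategory {X : A | extensionClosure P X} where
  mem_of_iso e hX := ObjectProperty.prop_of_iso (extensionClosure P) e hX
  kernel_mem f hX hY := (kernel_and_cokernel hX hY f).1
  cokernel_mem f hX hY := (kernel_and_cokernel hX hY f).2
  extension_mem _ hS h₁ h₃ := of_shortExact hS h₁ h₃

end extensionClosure

section FullyFaithful

variable {A B : Type*} [Category A] [Category B]

theorem prop_map_obj_iff_of_fullyFaithful (F : A ⥤ B) [F.Full] [F.Faithful]
    (P : ObjectProperty A) [P.IsClosedUnderIsomorphisms] (X : A) : P.map F (F.obj X) ↔ P X :=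
  ⟨fun ⟨_, hY, ⟨e⟩⟩ ↦ P.prop_of_iso (F.preimageIso e) hY, P.prop_map_obj F⟩

section

variable [HasZeroMorphisms A] [HasZeroMorphisms B] (F : A ⥤ B) [F.Full]

theorem preservesLimit_parallelPair_of_isClosedUnderSubobjects_essImage [HasKernels B]
    [F.Faithful] [F.essImage.IsClosedUnderSubobjects] {X Y : A} (f : X ⟶ Y) :
    PreservesLimit (parallelPair f 0) F := by
  obtain ⟨W, ⟨e⟩⟩ : F.essImage (kernel (F.map f)) :=
    F.essImage.prop_of_mono (kernel.ι (F.map f)) (F.obj_mem_essImage X)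
  let i : W ⟶ X := F.preimage (e.hom ≫ kernel.ι (F.map f))
  have hi : F.map i = e.hom ≫ kernel.ι (F.map f) := F.map_preimage _
  have w : i ≫ f = 0 := F.map_injective (by simp [hi])
  let k : KernelFork f := .ofι i w
  have hFk : IsLimit (F.mapCone k) := (k.isLimitMapConeEquiv F).symm <|
    IsLimit.ofIsoLimit (kernelIsKernel (F.map f))
      (Fork.ext e.symm ((congrArg (e.inv ≫ ·) hi).trans (e.inv_hom_id_assoc _)))
  exact preservesLimit_of_preserves_limit_cone (isLimitOfReflects F hFk) hFk

variable (P : ObjectProperty A)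

theorem isClosedUnderKernels_map [HasKernels A] [HasKernels B]
    [∀ {X Y : A} (f : X ⟶ Y), PreservesLimit (parallelPair f 0) F] [P.IsClosedUnderKernels] :
    (P.map F).IsClosedUnderKernels where
  kernels_le := by
    rintro _ ⟨f, k, hk, ⟨X, hX, ⟨e⟩⟩, ⟨Y, hY, ⟨e'⟩⟩⟩
    let g : X ⟶ Y := F.preimage (e.hom ≫ f ≫ e'.inv)
    let i : F.obj (kernel g) ≅ k.pt := PreservesKernel.iso F g ≪≫
      kernel.mapIso (F.map g) f e e' (by simp [g]) ≪≫
      (kernelIsKernel f).conePointUniqueUpToIso hk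
    exact ⟨kernel g, P.prop_kernel g hX hY, ⟨i⟩⟩

theorem isClosedUnderCokernels_map [HasCokernels A] [HasCokernels B]
    [∀ {X Y : A} (f : X ⟶ Y), PreservesColimit (parallelPair f 0) F] [P.IsClosedUnderCokernels] :
    (P.map F).IsClosedUnderCokernels where
  cokernels_le := by
    rintro _ ⟨f, k, hk, ⟨X, hX, ⟨e⟩⟩, ⟨Y, hY, ⟨e'⟩⟩⟩
    let g : X ⟶ Y := F.preimage (e.hom ≫ f ≫ e'.inv)
    let i : F.obj (cokernel g) ≅ k.pt := PreservesCokernel.iso F g ≪≫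
      cokernel.mapIso (F.map g) f e e' (by simp [g]) ≪≫
      (cokernelIsCokernel f).coconePointUniqueUpToIso hk
    exact ⟨cokernel g, P.prop_cokernel g hX hY, ⟨i⟩⟩

end

variable [Abelian A] [Abelian B] (F : A ⥤ B) [F.Full] [F.Faithful]
  [F.essImage.IsClosedUnderSubobjects]
  [∀ {X Y : A} (f : X ⟶ Y), PreservesColimit (parallelPair f 0) F]

theorem exists_shortExact_of_essImage {S : ShortComplex B} (hS : S.ShortExact) {X : A}
    (e : F.obj X ≅ S.X₂) :
    ∃ (W Z : A) (i : W ⟶ X) (p : X ⟶ Z) (w : i ≫ p = 0), (ShortComplex.mk i p w).ShortExact ∧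
      Nonempty (F.obj W ≅ S.X₁) ∧ Nonempty (F.obj Z ≅ S.X₃) := by
  have := hS.mono_f
  have := hS.epi_g
  obtain ⟨W, ⟨e'⟩⟩ : F.essImage S.X₁ := F.essImage.prop_of_mono S.f ⟨X, ⟨e⟩⟩
  let i : W ⟶ X := F.preimage (e'.hom ≫ S.f ≫ e.inv)
  have hi : F.map i = e'.hom ≫ S.f ≫ e.inv := F.map_preimage _
  have : Mono i := F.mono_of_mono_map (by rw [hi]; infer_instance)
  let e'' : F.obj (cokernel i) ≅ S.X₃ := PreservesCokernel.iso F i ≪≫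
    cokernel.mapIso (F.map i) S.f e' e (by simp [hi]) ≪≫
    (cokernelIsCokernel S.f).coconePointUniqueUpToIso hS.gIsCokernel
  exact ⟨W, cokernel i, i, cokernel.π i, cokernel.condition i,
    { exact := ShortComplex.exact_cokernel i }, ⟨e'⟩, ⟨e''⟩⟩

theorem prop_of_extensionClosure_map (P : ObjectProperty A) [P.IsClosedUnderIsomorphisms]
    [P.IsClosedUnderExtensions] {X : A} (hX : extensionClosure (P.map F) (F.obj X)) : P X := by
  suffices ∀ {Y : B}, extensionClosure (P.map F) Y → ∀ {X : A}, (F.obj X ≅ Y) → P X from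
    this hX (Iso.refl _)
  intro Y hY
  induction hY with
  | of_prop hY =>
    exact fun e ↦ (prop_map_obj_iff_of_fullyFaithful F P _).1 ((P.map F).prop_of_iso e.symm hY)
  | of_shortExact hS _ _ ih₁ ih₃ =>
    intro X e
    obtain ⟨W, Z, i, p, w, hT, ⟨e₁⟩, ⟨e₃⟩⟩ := exists_shortExact_of_essImage F hS e
    exact P.prop_X₂_of_shortExact hT (ih₁ e₁) (ih₃ e₃)

end FullyFaithful

section RestrictScalars

variable {R S : Type*} [Ring R] [Ring S] {π : R →+* S} (hπ : Function.Surjective π)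

include hπ

theorem restrictScalars_full_of_surjective : (ModuleCat.restrictScalars.{w} π).Full where
  map_surjective {M N} f :=
    ⟨ModuleCat.ofHom (X := M) (Y := N)
      { toFun := f.hom
        map_add' := f.hom.map_add
        map_smul' := hπ.forall.2 f.hom.map_smul }, rfl⟩

theorem essImage_restrictScalars_iff (M : ModuleCat.{w} R) :
    (ModuleCat.restrictScalars.{w} π).essImage M ↔
      Module.IsTorsionBySet R M (RingHom.ker π : Set R) := by
  constructor
  · rintro ⟨N, ⟨e⟩⟩ m ⟨r, hr : π r = 0⟩
    have h : r • e.inv m = 0 := (congrArg (· • (show N from e.inv m)) hr).trans (zero_smul S _)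
    apply (ModuleCat.mono_iff_injective e.inv).1 inferInstance
    rw [map_smul, h, map_zero]
  · intro hM
    let : SMul S M := ⟨fun s m ↦ Function.surjInv hπ s • m⟩
    have hsmul (r : R) (m : M) : π r • m = r • m := by
      have : Function.surjInv hπ (π r) - r ∈ RingHom.ker π := by
        simp [RingHom.mem_ker, Function.surjInv_eq hπ]
      exact sub_eq_zero.1 ((sub_smul _ r m).symm.trans (@hM m ⟨_, this⟩))
    let _ : Module S M := hπ.moduleLeft π hsmul
    let e : (ModuleCat.restrictScalars π).obj (ModuleCat.of S M) ≃ₗ[R] M :=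
      { AddEquiv.refl M with map_smul' := hsmul }
    exact ⟨ModuleCat.of S M, ⟨e.toModuleIso⟩⟩

theorem isClosedUnderSubobjects_essImage_restrictScalars :
    (ModuleCat.restrictScalars.{w} π).essImage.IsClosedUnderSubobjects where
  prop_of_mono f hf hN := by
    rw [essImage_restrictScalars_iff hπ] at hN ⊢
    intro m r
    apply (ModuleCat.mono_iff_injective f).1 hf
    rw [map_smul, map_zero]
    exact @hN (f m) r

end RestrictScalars

namespace IsWideSubcategory

variable {A : Type*} [Category A] [Abelian A] {C : Set A} (hC : IsWideSubcategory C)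

include hC

theorem isClosedUnderIsomorphisms : ObjectProperty.IsClosedUnderIsomorphisms (· ∈ C) where
  of_iso := hC.mem_of_iso

theorem isClosedUnderKernels : ObjectProperty.IsClosedUnderKernels (· ∈ C) where
  kernels_le := fun _ ⟨f, _, hk, hX, hY⟩ ↦
    hC.mem_of_iso ((kernelIsKernel f).conePointUniqueUpToIso hk) (hC.kernel_mem f hX hY)

theorem isClosedUnderCokernels : ObjectProperty.IsClosedUnderCokernels (· ∈ C) where
  cokernels_le := fun _ ⟨f, _, hk, hX, hY⟩ ↦
    hC.mem_of_iso ((cokernelIsCokernel f).coconePointUniqueUpToIso hk) (hC.cokernel_mem f hX hY)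

theorem isClosedUnderExtensions : ObjectProperty.IsClosedUnderExtensions (· ∈ C) where
  prop_X₂_of_shortExact := hC.extension_mem _

end IsWideSubcategory

section WideClosure

variable {A : Type*} [Category A] [Abelian A]

theorem subset_wideClosure (S : Set A) : S ⊆ wideClosure S :=
  Set.subset_sInter fun _ hD ↦ hD.2

theorem wideClosure_subset {S D : Set A} (hD : IsWideSubcategory D) (h : S ⊆ D) :
    wideClosure S ⊆ D :=
  Set.sInter_subset_of_mem ⟨hD, h⟩

end WideClosure

theorem vu_eq_self_general {A B : Type*} [Category A] [Abelian A] [Category B] [Abelian B]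
    (F : A ⥤ B) [F.Full] [F.Faithful] [PreservesFiniteColimits F]
    [F.essImage.IsClosedUnderSubobjects] {C : Set A} (hC : IsWideSubcategory C) :
    {X : A | F.obj X ∈ wideClosure (F.obj '' C)} = C := by
  let P : ObjectProperty A := (· ∈ C)
  have : P.IsClosedUnderIsomorphisms := hC.isClosedUnderIsomorphisms
  have : P.IsClosedUnderKernels := hC.isClosedUnderKernels
  have : P.IsClosedUnderCokernels := hC.isClosedUnderCokernels
  have : P.IsClosedUnderExtensions := hC.isClosedUnderExtensions
  have (X Y : A) (f : X ⟶ Y) : PreservesLimit (parallelPair f 0) F :=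
    preservesLimit_parallelPair_of_isClosedUnderSubobjects_essImage F f
  have := isClosedUnderKernels_map F P
  have := isClosedUnderCokernels_map F P
  have hwide := extensionClosure.isWideSubcategory (P.map F)
  have himage : F.obj '' C ⊆ {Y | extensionClosure (P.map F) Y} :=
    Set.image_subset_iff.2 fun _ hX ↦ .of_prop (P.prop_map_obj F hX)
  apply Set.Subset.antisymm
  · exact fun X hX ↦ prop_of_extensionClosure_map F P (wideClosure_subset hwide himage hX)
  · exact fun X hX ↦ subset_wideClosure _ (Set.mem_image_of_mem F.obj hX)

/-- Theorem 4.5: let `R` be a left coherent ring and `a` a two-sided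
ideal of `R`, finitely generated as a left ideal; present the quotient ring `R/a` as a
surjective ring homomorphism `π : R →+* S` with finitely generated kernel.  Let `u` send
a wide subcategory `C` of finitely presented `S`-modules to the wide subcategory of
`R`-modules generated by the modules of `C` restricted along `π`.  Then `u` is an
embedding: `v(u(C)) = C`, i.e. the `S`-modules whose restriction to `R` lies in `u(C)`
are exactly the members of `C`. -/
theorem vu_eq_self (R S : Type u) [Ring R] [Ring S] (π : R →+* S)
    (hπ : Function.Surjective π) (hcoh : IsLeftCoherentRing R)
    (hker : (RingHom.ker π).FG)
    (C : Set (ModuleCat.{u} S)) (hC : IsWideSubcategory C)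
    (hCfp : C ⊆ finPresModules S) :
    {N : ModuleCat.{u} S |
      (ModuleCat.restrictScalars π).obj N ∈
        wideClosure ((ModuleCat.restrictScalars π).obj '' C)} = C := by
  have := restrictScalars_full_of_surjective hπ
  have := isClosedUnderSubobjects_essImage_restrictScalars hπ
  exact vu_eq_self_general (ModuleCat.restrictScalars π) hC
end
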